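/- arXiv:2209.01003 — 4 statements merged into one kernel-verified Lean document; each statement's English description precedes it below -/
import Mathlib

section
/- There is no bijection σ : {1,2,3,…} → ℤ² with the following property: for every finitely supported function u : ℤ² → [0,∞), the rearranged function u^# defined by u^#(σ(k)) = a_k — where a₁ ≥ a₂ ≥ a₃ ≥ ⋯ are the values of u listed in decreasing order counted with multiplicity — satisfies ‖∇u^#‖₂ ≤ ‖∇u‖₂. -/
open Filter Topology

noncomputable section

abbrev ZLat (d : ℕ) := Fin d → ℤ

def stdVec (d : ℕ) (i : Fin d) : Fin d → ℝ := fun j => if j = i then 1 else 0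

/-- The set of directions E⃗ ⊆ ℝ^d. -/
def Evec (d : ℕ) : Set (Fin d → ℝ) :=
  {e | (∃ i, e = stdVec d i) ∨
    (∃ i j : Fin d, i < j ∧ e = fun k => (stdVec d i k + stdVec d j k) / 2) ∨
    (∃ i j : Fin d, i < j ∧ e = fun k => (stdVec d i k - stdVec d j k) / 2)}

/-- A fixed enumeration of E⃗ (for d = 2 it is e₁, e₂, (e₁+e₂)/2, (e₁-e₂)/2). -/
def EvecList (d : ℕ) : List (Fin d → ℝ) :=
  ((List.finRange d).map (stdVec d)) ++
  ((List.finRange d).flatMap fun i => (List.finRange d).filterMap fun j =>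
    if i < j then some (fun k => (stdVec d i k + stdVec d j k) / 2) else none) ++
  ((List.finRange d).flatMap fun i => (List.finRange d).filterMap fun j =>
    if i < j then some (fun k => (stdVec d i k - stdVec d j k) / 2) else none)

/-- The n-th largest value of `u`, counted with multiplicity (1-indexed). -/
def nthLargest {α : Type*} (u : α → NNReal) (n : ℕ) : NNReal :=
  sSup {t | ∃ Ω : Finset α, Ω.card = n ∧ ∀ x ∈ Ω, t ≤ u x}

/-- The 1-indexed position of the point with doubled coordinate `m` in the
spiral order 0, 1, −1, 2, −2, … (for even m) resp. 1/2, −1/2, 3/2, −3/2, … (for odd m). -/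
def posIdx (m : ℤ) : ℕ := (if 0 < m then m else 1 - m).toNat

/-- `x` and `y` lie on a common line with direction `e`. -/
def sameLine {d : ℕ} (e : Fin d → ℝ) (x y : ZLat d) : Prop :=
  ∃ c : ℝ, (fun i => (x i : ℝ) - (y i : ℝ)) = c • e

/-- Twice the inner product ⟨e, x⟩, as an integer. -/
def pairing {d : ℕ} (e : Fin d → ℝ) (x : ZLat d) : ℤ :=
  ⌊2 * ∑ i, e i * (x i : ℝ)⌋

/-- One-step rearrangement `R_e`. -/
def stepR {d : ℕ} (e : Fin d → ℝ) (u : ZLat d → NNReal) : ZLat d → NNReal :=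
  fun x => nthLargest (fun y : {y : ZLat d // sameLine e x y} => u y.1) (posIdx (pairing e x))

/-- `R^k u` : k successive one-step rearrangements cycling through the fixed enumeration. -/
def iterR (d : ℕ) (u : ZLat d → NNReal) : ℕ → ZLat d → NNReal
  | 0 => u
  | k + 1 => stepR ((EvecList d).getD (k % (EvecList d).length) 0) (iterR d u k)

/-- The Schwarz rearrangement on ℤ^d : pointwise limit of `R^k u`. -/
def RZd (d : ℕ) (u : ZLat d → NNReal) : ZLat d → NNReal :=
  fun x => limUnder atTop fun k => iterR d u k x

def Admissible {α : Type*} (u : α → NNReal) : Prop :=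
  ∀ t : NNReal, 0 < t → {x | t < u x}.Finite

def Equimeasurable {α : Type*} (u v : α → NNReal) : Prop :=
  ∀ t : NNReal, 0 < t → Nonempty ({x | t < u x} ≃ {x | t < v x})

/-- Graph distance (ℓ¹ distance) on the lattice ℤ^d. -/
def latDist {d : ℕ} (x y : ZLat d) : ℕ := ∑ i, (x i - y i).natAbs

/-- The i-th standard basis vector of ℤ^d. -/
def latE {d : ℕ} (i : Fin d) : ZLat d := fun j => if j = i then 1 else 0

/-- ‖∇u‖_p^p : the p-Sobolev energy, summing over each edge {x, x+e_i} once. -/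
def gradEnergy (d : ℕ) (p : ℝ) (u : ZLat d → NNReal) : ENNReal :=
  ∑' (x : ZLat d) (i : Fin d), ENNReal.ofReal (|(u (x + latE i) : ℝ) - (u x : ℝ)| ^ p)

/-- ‖∇u‖_p. -/
def gradNorm (d : ℕ) (p : ℝ) (u : ZLat d → NNReal) : ENNReal :=
  gradEnergy d p u ^ (1 / p)

/-- Graph automorphism of the lattice graph ℤ^d. -/
def IsLatAuto {d : ℕ} (σ : ZLat d ≃ ZLat d) : Prop :=
  ∀ x y : ZLat d, latDist (σ x) (σ y) = 1 ↔ latDist x y = 1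

def Supermodular (G : NNReal → NNReal → NNReal) : Prop :=
  ∀ s t s₀ t₀ : NNReal, G (s + s₀) t + G s (t + t₀) ≤ G (s + s₀) (t + t₀) + G s t

def StrictlySupermodular (G : NNReal → NNReal → NNReal) : Prop :=
  ∀ s t s₀ t₀ : NNReal, 0 < s₀ → 0 < t₀ →
    G (s + s₀) t + G s (t + t₀) < G (s + s₀) (t + t₀) + G s t

/-- The values of `u` are strictly decreasing: a₁ > a₂ > a₃ > ⋯ . -/
def StrictRan {α : Type*} (u : α → NNReal) : Prop :=
  ∀ n : ℕ, 0 < n → nthLargest u (n + 1) < nthLargest u n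


lemma nthLargest_le {α : Type*} (u : α → NNReal) (n : ℕ) (t : NNReal) (F : Finset α)
    (hF : ∀ x, t < u x → x ∈ F) (hn : F.card < n) : nthLargest u n ≤ t := by
  unfold nthLargest
  apply csSup_le'
  rintro s ⟨Ω, hΩ, hs⟩
  by_contra hlt
  push Not at hlt
  have hsub : Ω ⊆ F := fun x hx => hF x (lt_of_lt_of_le hlt (hs x hx))
  have := Finset.card_le_card hsub
  omega

lemma le_nthLargest {α : Type*} (u : α → NNReal) (n : ℕ) (t B : NNReal) (Ω : Finset α)
    (hB : ∀ x, u x ≤ B) (hΩ : ∀ x ∈ Ω, t ≤ u x) (hn : Ω.card = n) (hn0 : 0 < n) :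
    t ≤ nthLargest u n := by
  unfold nthLargest
  apply le_csSup
  · refine ⟨B, ?_⟩
    rintro s ⟨Ω', hΩ', hs⟩
    have : Ω'.Nonempty := Finset.card_pos.mp (by omega)
    obtain ⟨x, hx⟩ := this
    exact (hs x hx).trans (hB x)
  · exact ⟨Ω, hn, hΩ⟩

def shiftEquiv (c : ZLat 2) : ℤ × ℤ ≃ ZLat 2 where
  toFun p := c + ![p.1, p.2]
  invFun x := (x 0 - c 0, x 1 - c 1)
  left_inv p := by ext <;> simp
  right_inv x := by ext i; fin_cases i <;> simp

/-- Value at the shifted point. -/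
def sh (c : ZLat 2) (u : ZLat 2 → NNReal) (a b : ℤ) : ℝ := (u (c + ![a, b]) : ℝ)

lemma gradEnergy_shift (c : ZLat 2) (u : ZLat 2 → NNReal) :
    gradEnergy 2 2 u = ∑' p : ℤ × ℤ, ENNReal.ofReal
      ((sh c u (p.1 + 1) p.2 - sh c u p.1 p.2) ^ 2 + (sh c u p.1 (p.2 + 1) - sh c u p.1 p.2) ^ 2) := by
  unfold gradEnergy
  rw [← (shiftEquiv c).tsum_eq]
  congr 1
  ext1 p
  rw [tsum_fintype, Fin.sum_univ_two, ENNReal.ofReal_add (sq_nonneg _) (sq_nonneg _)]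
  have h0 : shiftEquiv c p + latE 0 = c + ![p.1 + 1, p.2] := by
    ext i; fin_cases i <;> simp [shiftEquiv, latE, add_assoc, Matrix.vecHead, Matrix.vecTail]
  have h1 : shiftEquiv c p + latE 1 = c + ![p.1, p.2 + 1] := by
    ext i; fin_cases i <;> simp [shiftEquiv, latE, add_assoc, Matrix.vecHead, Matrix.vecTail]
  rw [h0, h1]
  simp [sh, shiftEquiv]

lemma energy_lower (c : ZLat 2) (u : ZLat 2 → NNReal) (F : Finset (ℤ × ℤ)) :
    ENNReal.ofReal (∑ p ∈ F,
      ((sh c u (p.1 + 1) p.2 - sh c u p.1 p.2) ^ 2 + (sh c u p.1 (p.2 + 1) - sh c u p.1 p.2) ^ 2))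
      ≤ gradEnergy 2 2 u := by
  rw [gradEnergy_shift c, ENNReal.ofReal_sum_of_nonneg (fun _ _ => by positivity)]
  exact ENNReal.sum_le_tsum F

def starF (a b : ℤ) : ℕ := if a = 0 ∧ b = 0 then 10 else
  if (a = 1 ∧ b = 0) ∨ (a = -1 ∧ b = 0) ∨ (a = 0 ∧ b = 1) ∨ (a = 0 ∧ b = -1) then 1 else 0

def sqF (a b : ℤ) : ℕ := if (a = 0 ∨ a = 1) ∧ (b = 0 ∨ b = 1) then 1 else 0

def toU (f : ℤ → ℤ → ℕ) (x : ZLat 2) : NNReal := (f (x 0) (x 1) : NNReal)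

def box : Finset (ℤ × ℤ) :=
  ({-2, -1, 0, 1, 2} : Finset ℤ) ×ˢ ({-2, -1, 0, 1, 2} : Finset ℤ)

lemma mem_box (a b : ℤ) : (a, b) ∈ box ↔ (-2 ≤ a ∧ a ≤ 2) ∧ (-2 ≤ b ∧ b ≤ 2) := by
  simp only [box, Finset.mem_product, Finset.mem_insert, Finset.mem_singleton]
  omega

lemma energy_toU (f : ℤ → ℤ → ℕ) (hf : ∀ a b, f a b ≠ 0 → (-1 ≤ a ∧ a ≤ 1) ∧ (-1 ≤ b ∧ b ≤ 1)) :
    gradEnergy 2 2 (toU f) = ENNReal.ofReal ((∑ p ∈ box,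
      (((f (p.1 + 1) p.2 : ℤ) - f p.1 p.2) ^ 2 + ((f p.1 (p.2 + 1) : ℤ) - f p.1 p.2) ^ 2) : ℤ) : ℝ) := by
  rw [gradEnergy_shift 0, tsum_eq_sum (s := box)]
  · rw [← ENNReal.ofReal_sum_of_nonneg (fun _ _ => by positivity)]
    congr 1
    push_cast
    simp [sh, toU]
  · rintro ⟨a, b⟩ hp
    rw [mem_box] at hp
    have h0 : f a b = 0 := by by_contra h; have := hf _ _ h; omega
    have h1 : f (a + 1) b = 0 := by by_contra h; have := hf _ _ h; omega
    have h2 : f a (b + 1) = 0 := by by_contra h; have := hf _ _ h; omega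
    simp [sh, toU, h0, h1, h2]

lemma starF_supp (a b : ℤ) (h : starF a b ≠ 0) : (-1 ≤ a ∧ a ≤ 1) ∧ (-1 ≤ b ∧ b ≤ 1) := by
  unfold starF at h; split_ifs at h <;> omega

lemma sqF_supp (a b : ℤ) (h : sqF a b ≠ 0) : (-1 ≤ a ∧ a ≤ 1) ∧ (-1 ≤ b ∧ b ≤ 1) := by
  unfold sqF at h; split_ifs at h <;> omega

lemma energy_star : gradEnergy 2 2 (toU starF) = ENNReal.ofReal 336 := by
  rw [energy_toU _ starF_supp]
  have : (∑ p ∈ box, (((starF (p.1 + 1) p.2 : ℤ) - starF p.1 p.2) ^ 2 +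
    ((starF p.1 (p.2 + 1) : ℤ) - starF p.1 p.2) ^ 2) : ℤ) = 336 := by decide +kernel
  rw [this]
  norm_num

lemma energy_sq : gradEnergy 2 2 (toU sqF) = ENNReal.ofReal 8 := by
  rw [energy_toU _ sqF_supp]
  have : (∑ p ∈ box, (((sqF (p.1 + 1) p.2 : ℤ) - sqF p.1 p.2) ^ 2 +
    ((sqF p.1 (p.2 + 1) : ℤ) - sqF p.1 p.2) ^ 2) : ℤ) = 8 := by decide +kernel
  rw [this]
  norm_num

lemma supp_toU (f : ℤ → ℤ → ℕ) (hf : ∀ a b, f a b ≠ 0 → (-1 ≤ a ∧ a ≤ 1) ∧ (-1 ≤ b ∧ b ≤ 1)) :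
    (Function.support (toU f)).Finite := by
  apply (box.finite_toSet.image (shiftEquiv 0)).subset
  intro x hx
  refine ⟨(x 0, x 1), ?_, ?_⟩
  · have := hf (x 0) (x 1) (by simpa [toU] using hx)
    rw [Finset.mem_coe, mem_box]; omega
  · ext i; fin_cases i <;> simp [shiftEquiv]

def starList : List (ZLat 2) := [![0,0], ![1,0], ![-1,0], ![0,1], ![0,-1]]
def sqList : List (ZLat 2) := [![0,0], ![1,0], ![0,1], ![1,1]]

lemma vec_eq (x : ZLat 2) (a b : ℤ) : x = ![a, b] ↔ x 0 = a ∧ x 1 = b := by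
  constructor
  · rintro rfl; simp
  · rintro ⟨h0, h1⟩; ext i; fin_cases i <;> simp [h0, h1]

/-- If `u` is `≥ t` on the list, and the list has at least `n` entries. -/
lemma le_nth_list (u : ZLat 2 → NNReal) (L : List (ZLat 2)) (hL : L.Nodup) (n : ℕ) (t B : NNReal)
    (hB : ∀ x, u x ≤ B) (hu : ∀ x ∈ L, t ≤ u x) (hn : n + 1 ≤ L.length) :
    t ≤ nthLargest u (n + 1) := by
  refine le_nthLargest u (n + 1) t B (L.take (n + 1)).toFinset hB ?_ ?_ (by omega)
  · intro x hx
    exact hu x (List.mem_of_mem_take (List.mem_toFinset.mp hx))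
  · rw [List.toFinset_card_of_nodup (hL.sublist (List.take_sublist _ _)), List.length_take]
    omega

lemma nth_list_le (u : ZLat 2 → NNReal) (L : List (ZLat 2)) (n : ℕ) (t : NNReal)
    (hu : ∀ x, t < u x → x ∈ L) (hn : L.length ≤ n) :
    nthLargest u (n + 1) ≤ t := by
  refine nthLargest_le u (n + 1) t L.toFinset (fun x hx => List.mem_toFinset.mpr (hu x hx)) ?_
  have := List.toFinset_card_le L
  omega

lemma starF_le (a b : ℤ) : starF a b ≤ 10 := by
  unfold starF; split_ifs <;> omega

lemma sqF_le (a b : ℤ) : sqF a b ≤ 1 := by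
  unfold sqF; split_ifs <;> omega

lemma star_nth (n : ℕ) : nthLargest (toU starF) (n + 1) =
    if n = 0 then 10 else if n ≤ 4 then 1 else 0 := by
  have hB : ∀ x, toU starF x ≤ 10 := fun x => by
    unfold toU; exact_mod_cast starF_le _ _
  split_ifs with h0 h4
  · subst h0
    apply le_antisymm
    · exact nth_list_le _ [] 0 10 (fun x hx => absurd hx (not_lt.mpr (hB x))) (by simp)
    · exact le_nth_list _ [![0,0]] (by simp) 0 10 10 hB (by simp [toU, starF]) (by simp)
  · apply le_antisymm
    · refine nth_list_le _ [![0,0]] n 1 (fun x hx => ?_) (by simp; omega)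
      have : 1 < starF (x 0) (x 1) := by unfold toU at hx; exact_mod_cast hx
      rw [List.mem_singleton, vec_eq]
      unfold starF at this
      split_ifs at this <;> omega
    · exact le_nth_list _ starList (by decide) n 1 10 hB (by simp [toU, starF, starList])
        (by simp [starList]; omega)
  · apply le_antisymm
    · refine nth_list_le _ starList n 0 (fun x hx => ?_) (by simp [starList]; omega)
      have : 0 < starF (x 0) (x 1) := by unfold toU at hx; exact_mod_cast hx
      simp only [starList, List.mem_cons, vec_eq, List.not_mem_nil]
      unfold starF at this
      split_ifs at this <;> omega
    · exact zero_le

lemma sq_nth (n : ℕ) : nthLargest (toU sqF) (n + 1) = if n ≤ 3 then 1 else 0 := by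
  have hB : ∀ x, toU sqF x ≤ 1 := fun x => by
    unfold toU; exact_mod_cast sqF_le _ _
  split_ifs with h3
  · apply le_antisymm
    · exact nth_list_le _ [] n 1 (fun x hx => absurd hx (not_lt.mpr (hB x))) (by simp)
    · exact le_nth_list _ sqList (by decide) n 1 1 hB (by simp [toU, sqF, sqList])
        (by simp [sqList]; omega)
  · apply le_antisymm
    · refine nth_list_le _ sqList n 0 (fun x hx => ?_) (by simp [sqList]; omega)
      have : 0 < sqF (x 0) (x 1) := by unfold toU at hx; exact_mod_cast hx
      simp only [sqList, List.mem_cons, vec_eq, List.not_mem_nil]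
      unfold sqF at this
      split_ifs at this <;> omega
    · exact zero_le

lemma gradNorm_le_iff (u v : ZLat 2 → NNReal) :
    gradNorm 2 2 u ≤ gradNorm 2 2 v ↔ gradEnergy 2 2 u ≤ gradEnergy 2 2 v := by
  unfold gradNorm
  exact ENNReal.rpow_le_rpow_iff (by norm_num)

lemma drop_sq (a b c d x y : ℝ) (h : a + b + (c + x ^ 2 + (y ^ 2 + d)) ≤ 336) :
    a + b + c + d ≤ 336 := by
  nlinarith [sq_nonneg x, sq_nonneg y]

lemma star_step (k1 k2 k3 k4 : ℕ) (x y : ℝ) (hcon : ¬ (k1 ≤ 4 ∧ k2 ≤ 4 ∧ k3 ≤ 4 ∧ k4 ≤ 4))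
    (h : ((if k1 ≤ 4 then (1 : ℝ) else 0) - 10) ^ 2 + ((if k3 ≤ 4 then (1 : ℝ) else 0) - 10) ^ 2 +
      ((10 - if k2 ≤ 4 then (1 : ℝ) else 0) ^ 2 + (x - if k2 ≤ 4 then (1 : ℝ) else 0) ^ 2 +
        ((y - if k4 ≤ 4 then (1 : ℝ) else 0) ^ 2 + (10 - if k4 ≤ 4 then (1 : ℝ) else 0) ^ 2)) ≤ 336) :
    False := by
  have h := drop_sq _ _ _ _ _ _ h
  by_cases h1 : k1 ≤ 4 <;> by_cases h2 : k2 ≤ 4 <;> by_cases h3 : k3 ≤ 4 <;>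
    by_cases h4 : k4 ≤ 4 <;> simp only [h1, h2, h3, h4, if_true, if_false] at h <;>
    first | (exact hcon ⟨h1, h2, h3, h4⟩) | (norm_num at h; done)

lemma pigeon4 (a b c d : ℕ) (ha : a ≠ 0) (hb : b ≠ 0) (hc : c ≠ 0) (hd : d ≠ 0)
    (h : a ≤ 4 ∧ b ≤ 4 ∧ c ≤ 4 ∧ d ≤ 4) (h1 : a ≠ b) (h2 : a ≠ c) (h3 : a ≠ d)
    (h4 : b ≠ c) (h5 : b ≠ d) (h6 : c ≠ d) :
    (¬ a ≤ 3 ∧ b ≤ 3 ∧ c ≤ 3 ∧ d ≤ 3) ∨ (a ≤ 3 ∧ ¬ b ≤ 3 ∧ c ≤ 3 ∧ d ≤ 3) ∨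
    (a ≤ 3 ∧ b ≤ 3 ∧ ¬ c ≤ 3 ∧ d ≤ 3) ∨ (a ≤ 3 ∧ b ≤ 3 ∧ c ≤ 3 ∧ ¬ d ≤ 3) := by
  obtain ⟨g1, g2, g3, g4⟩ := h
  interval_cases a <;> interval_cases b <;> first | contradiction | skip
  all_goals interval_cases c <;> first | contradiction | omega

lemma pigeon (a b c d e : ℕ) (ha : a ≠ 0) (hb : b ≠ 0) (hc : c ≠ 0) (hd : d ≠ 0)
    (h : a ≤ 4 ∧ b ≤ 4 ∧ c ≤ 4 ∧ d ≤ 4) (h1 : a ≠ b) (h2 : a ≠ c) (h3 : a ≠ d)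
    (h4 : b ≠ c) (h5 : b ≠ d) (h6 : c ≠ d) (e0 : e ≠ 0) (e1 : e ≠ a) (e2 : e ≠ b)
    (e3 : e ≠ c) (e4 : e ≠ d) : ¬ e ≤ 3 := by
  intro he
  obtain ⟨g1, g2, g3, g4⟩ := h
  interval_cases a <;> interval_cases b <;> first | contradiction | skip
  all_goals interval_cases c <;> first | contradiction | omega

/-- There is no bijection σ : ℕ → ℤ² such that rearranging every finitely supported
nonnegative function decreasingly along σ never increases the Sobolev seminorm. -/
theorem stmt0 :
    ¬ ∃ σ : ℕ ≃ ZLat 2, ∀ u : ZLat 2 → NNReal, (Function.support u).Finite →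
      gradNorm 2 2 (fun x => nthLargest u (σ.symm x + 1)) ≤ gradNorm 2 2 u := by
  rintro ⟨σ, hσ⟩
  set c := σ 0 with hc
  have H1 := hσ (toU starF) (supp_toU _ starF_supp)
  have H2 := hσ (toU sqF) (supp_toU _ sqF_supp)
  rw [gradNorm_le_iff, energy_star] at H1
  rw [gradNorm_le_iff, energy_sq] at H2
  simp only [star_nth] at H1
  simp only [sq_nth] at H2
  obtain ⟨q, hq⟩ : ∃ q : ℤ → ℤ → ℕ, ∀ a b, q a b = σ.symm (c + ![a, b]) := ⟨_, fun _ _ => rfl⟩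
  have qinj : ∀ a b a' b', q a b = q a' b' → a = a' ∧ b = b' := by
    intro a b a' b' h
    rw [hq, hq] at h
    have h := add_left_cancel (σ.symm.injective h)
    exact ⟨by simpa using congrFun h 0, by simpa using congrFun h 1⟩
  have q0 : q 0 0 = 0 := by
    rw [hq]
    have : c + ![0, 0] = c := by ext i; fin_cases i <;> simp
    rw [this, hc]; simp
  have E1 := (ENNReal.ofReal_le_ofReal_iff (by norm_num)).mp
    ((energy_lower c _ {(0,0), (-1,0), (0,-1)}).trans H1)
  have E2 := (ENNReal.ofReal_le_ofReal_iff (by norm_num)).mp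
    ((energy_lower c _ {(0,0), (-1,0), (0,-1), (1,0), (0,1), (-2,0), (-1,-1), (1,-1), (-1,1), (0,-2)}).trans H2)
  have S1 : ∀ a b, sh c (fun x => if σ.symm x = 0 then 10 else if σ.symm x ≤ 4 then 1 else 0) a b
      = if q a b = 0 then 10 else if q a b ≤ 4 then 1 else 0 := by
    intro a b; simp only [sh, ← hq]; split_ifs <;> simp
  have S2 : ∀ a b, sh c (fun x => if σ.symm x ≤ 3 then 1 else 0) a b
      = if q a b ≤ 3 then 1 else 0 := by
    intro a b; simp only [sh, ← hq]; split_ifs <;> simp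
  simp only [S1] at E1
  simp only [S2] at E2
  have ne : ∀ a b a' b', (a ≠ a' ∨ b ≠ b') → q a b ≠ q a' b' := by
    intro a b a' b' h h'
    have := qinj _ _ _ _ h'
    omega
  have n1 := ne 1 0 0 0 (by decide)
  have n2 := ne (-1) 0 0 0 (by decide)
  have n3 := ne 0 1 0 0 (by decide)
  have n4 := ne 0 (-1) 0 0 (by decide)
  have m12 := ne 1 0 (-1) 0 (by decide)
  have m13 := ne 1 0 0 1 (by decide)
  have m14 := ne 1 0 0 (-1) (by decide)
  have m23 := ne (-1) 0 0 1 (by decide)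
  have m24 := ne (-1) 0 0 (-1) (by decide)
  have m34 := ne 0 1 0 (-1) (by decide)
  rw [q0] at n1 n2 n3 n4
  have all4 : q 1 0 ≤ 4 ∧ q (-1) 0 ≤ 4 ∧ q 0 1 ≤ 4 ∧ q 0 (-1) ≤ 4 := by
    rw [Finset.sum_insert (by decide), Finset.sum_insert (by decide), Finset.sum_singleton] at E1
    norm_num only [q0, n1, n2, n3, n4, if_true, if_false] at E1
    by_contra hcon
    exact star_step _ _ _ _ _ _ hcon E1
  have far : ∀ a b, (a ≠ 0 ∨ b ≠ 0) → (a ≠ 1 ∨ b ≠ 0) → (a ≠ -1 ∨ b ≠ 0) → (a ≠ 0 ∨ b ≠ 1) →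
      (a ≠ 0 ∨ b ≠ -1) → ¬ q a b ≤ 3 := by
    intro a b h0 h1 h2 h3 h4
    have e0 := ne _ _ _ _ h0
    rw [q0] at e0
    exact pigeon _ _ _ _ _ n1 n2 n3 n4 all4 m12 m13 m14 m23 m24 m34 e0 (ne _ _ _ _ h1)
      (ne _ _ _ _ h2) (ne _ _ _ _ h3) (ne _ _ _ _ h4)
  have f1 := far 2 0 (by decide) (by decide) (by decide) (by decide) (by decide)
  have f2 := far (-2) 0 (by decide) (by decide) (by decide) (by decide) (by decide)
  have f3 := far 0 2 (by decide) (by decide) (by decide) (by decide) (by decide)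
  have f4 := far 0 (-2) (by decide) (by decide) (by decide) (by decide) (by decide)
  have f5 := far 1 1 (by decide) (by decide) (by decide) (by decide) (by decide)
  have f6 := far 1 (-1) (by decide) (by decide) (by decide) (by decide) (by decide)
  have f7 := far (-1) 1 (by decide) (by decide) (by decide) (by decide) (by decide)
  have f8 := far (-1) (-1) (by decide) (by decide) (by decide) (by decide) (by decide)
  iterate 9 rw [Finset.sum_insert (by decide)] at E2
  rw [Finset.sum_singleton] at E2
  norm_num only [q0, f1, f2, f3, f4, f5, f6, f7, f8, if_true, if_false] at E2
  have hcases : (¬ q 1 0 ≤ 3 ∧ q (-1) 0 ≤ 3 ∧ q 0 1 ≤ 3 ∧ q 0 (-1) ≤ 3) ∨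
      (q 1 0 ≤ 3 ∧ ¬ q (-1) 0 ≤ 3 ∧ q 0 1 ≤ 3 ∧ q 0 (-1) ≤ 3) ∨
      (q 1 0 ≤ 3 ∧ q (-1) 0 ≤ 3 ∧ ¬ q 0 1 ≤ 3 ∧ q 0 (-1) ≤ 3) ∨
      (q 1 0 ≤ 3 ∧ q (-1) 0 ≤ 3 ∧ q 0 1 ≤ 3 ∧ ¬ q 0 (-1) ≤ 3) :=
    pigeon4 _ _ _ _ n1 n2 n3 n4 all4 m12 m13 m14 m23 m24 m34
  obtain ⟨g, hg⟩ : ∃ g : ℤ → ℤ → ℝ, ∀ a b, (if q a b ≤ 3 then (1 : ℝ) else 0) = g a b :=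
    ⟨_, fun _ _ => rfl⟩
  have g1 : ∀ a b, q a b ≤ 3 → g a b = 1 := fun a b h => by rw [← hg, if_pos h]
  have g0 : ∀ a b, ¬ q a b ≤ 3 → g a b = 0 := fun a b h => by rw [← hg, if_neg h]
  simp only [hg] at E2
  have b1 := sq_nonneg (g (-1) 2 - g (-1) 1)
  rcases hcases with ⟨h1, h2, h3, h4⟩ | ⟨h1, h2, h3, h4⟩ | ⟨h1, h2, h3, h4⟩ | ⟨h1, h2, h3, h4⟩
  all_goals
    first | rw [g1 _ _ h1] at E2 | rw [g0 _ _ h1] at E2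
    first | rw [g1 _ _ h2] at E2 | rw [g0 _ _ h2] at E2
    first | rw [g1 _ _ h3] at E2 | rw [g0 _ _ h3] at E2
    first | rw [g1 _ _ h4] at E2 | rw [g0 _ _ h4] at E2
    norm_num at E2
    nlinarith [E2, sq_nonneg (g (-1) 2), sq_nonneg (g (-2) 1), sq_nonneg (g 2 (-1)),
      sq_nonneg (g 1 (-2))]

end
end

section
/- Let u : ℤ² → [0,∞) be finitely supported with |supp u| = 5. Then the infimum inf{‖∇v‖₂ : v : ℤ² → [0,∞) equimeasurable with u} is attained, and every minimizer u′ has the property that there is a graph automorphism σ of ℤ² mapping supp u′ onto either V◇₁ = {(0,0), (1,0), (−1,0), (0,1), (0,−1)} or Ω = {(0,0), (0,1), (1,0), (0,−1), (1,1)}. -/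
open Filter Topology

noncomputable section

def Vdia1 : Set (ZLat 2) := {![0,0], ![1,0], ![-1,0], ![0,1], ![0,-1]}

def Omega5 : Set (ZLat 2) := {![0,0], ![0,1], ![1,0], ![0,-1], ![1,1]}

namespace S5

def QQ (a : Fin 5 → NNReal) (φ : Fin 5 → ZLat 2) : ℝ :=
  ∑ i, ∑ j, if latDist (φ i) (φ j) = 1 then (a i : ℝ) * (a j : ℝ) else 0

/-- `v` takes the value `a i` at the point `φ i` and vanishes elsewhere. -/
def Param (a : Fin 5 → NNReal) (φ : Fin 5 → ZLat 2) (v : ZLat 2 → NNReal) : Prop :=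
  (∀ i, v (φ i) = a i) ∧ ∀ x, x ∉ Set.range φ → v x = 0

theorem exists_param (a : Fin 5 → NNReal) (φ : Fin 5 → ZLat 2) (hφ : Function.Injective φ) :
    ∃ v, Param a φ v := by
  refine ⟨Function.extend φ a 0, fun i => hφ.extend_apply _ _ _, fun x hx => ?_⟩
  rw [Function.extend_apply' _ _ _ (by simpa using hx)]
  rfl

theorem equi_of_param {a : Fin 5 → NNReal} {φ ψ : Fin 5 → ZLat 2} {u v : ZLat 2 → NNReal}
    (hφ : Function.Injective φ) (hψ : Function.Injective ψ) (hu : Param a φ u)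
    (hv : Param a ψ v) : Equimeasurable u v := by
  have key : ∀ (φ : Fin 5 → ZLat 2) (u : ZLat 2 → NNReal), Function.Injective φ → Param a φ u →
      ∀ t : NNReal, Nonempty ({i | t < a i} ≃ {x | t < u x}) := by
    intro φ u hφ hu t
    refine ⟨Equiv.ofBijective (fun i => ⟨φ i.1, ?_⟩) ⟨?_, ?_⟩⟩
    · have h : t < a i.1 := i.2
      change t < u (φ i.1)
      rwa [hu.1]
    · intro i j h
      simpa [Subtype.ext_iff, hφ.eq_iff] using h
    · rintro ⟨x, hx⟩
      have hx' : t < u x := hx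
      by_cases h : x ∈ Set.range φ
      · obtain ⟨i, rfl⟩ := h
        exact ⟨⟨i, by simpa [hu.1] using hx'⟩, rfl⟩
      · rw [hu.2 x h] at hx'
        exact absurd hx' (not_lt.2 zero_le)
  intro t _
  obtain ⟨e⟩ := key φ u hφ hu t
  obtain ⟨f⟩ := key ψ v hψ hv t
  exact ⟨e.symm.trans f⟩

theorem support_param {a : Fin 5 → NNReal} {φ : Fin 5 → ZLat 2} {u : ZLat 2 → NNReal}
    (ha : ∀ i, a i ≠ 0) (hu : Param a φ u) : Function.support u = Set.range φ := by
  ext x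
  constructor
  · intro hx
    by_contra h
    exact hx (hu.2 x h)
  · rintro ⟨i, rfl⟩
    simp [hu.1, ha]

theorem dir_sum {a : Fin 5 → NNReal} {φ : Fin 5 → ZLat 2} {v : ZLat 2 → NNReal}
    (hφ : Function.Injective φ) (hv : Param a φ v) (e : ZLat 2) :
    HasSum (fun x => ((v (x + e) : ℝ) - v x) ^ 2)
      (2 * ∑ i, (a i : ℝ) ^ 2 - 2 * ∑ i, ∑ j, if φ j = φ i + e then (a i : ℝ) * a j else 0) := by
  have h1 : HasSum (fun x => (v x : ℝ) ^ 2) (∑ i, (a i : ℝ) ^ 2) := by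
    have h := (hφ.hasSum_iff (f := fun x => (v x : ℝ) ^ 2)
      (fun x hx => by simp [hv.2 x hx])).1 (hasSum_fintype _)
    simpa [Function.comp_def, hv.1] using h
  have h2 : HasSum (fun x => (v (x + e) : ℝ) ^ 2) (∑ i, (a i : ℝ) ^ 2) :=
    (Equiv.hasSum_iff (Equiv.addRight e)).2 h1
  have h3 : HasSum (fun x => (v x : ℝ) * v (x + e))
      (∑ i, ∑ j, if φ j = φ i + e then (a i : ℝ) * a j else 0) := by
    have h := (hφ.hasSum_iff (f := fun x => (v x : ℝ) * v (x + e))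
      (fun x hx => by simp [hv.2 x hx])).1 (hasSum_fintype _)
    convert h using 1
    refine Finset.sum_congr rfl fun i _ => ?_
    simp only [Function.comp_def, hv.1]
    by_cases hx : φ i + e ∈ Set.range φ
    · obtain ⟨k, hk⟩ := hx
      simp [← hk, hv.1, hφ.eq_iff]
    · rw [hv.2 _ hx]
      simp only [NNReal.coe_zero, mul_zero]
      refine Finset.sum_eq_zero fun j _ => if_neg fun hj => hx ⟨j, hj⟩
  have h4 := (h2.add h1).sub (h3.mul_left 2)
  have e1 : (fun x => ((v (x + e) : ℝ) - v x) ^ 2) =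
      fun x => (v (x + e) : ℝ) ^ 2 + (v x : ℝ) ^ 2 - 2 * ((v x : ℝ) * v (x + e)) := by
    funext x; ring
  rw [e1, two_mul (∑ i, (a i : ℝ) ^ 2)]
  exact h4

theorem latDist_two (x y : ZLat 2) : latDist x y = (x 0 - y 0).natAbs + (x 1 - y 1).natAbs := by
  simp [latDist, Fin.sum_univ_two]

theorem eq_add_iff (x y : ZLat 2) (k : Fin 2) :
    y = x + latE k ↔ y 0 = x 0 + (if k = 0 then 1 else 0) ∧ y 1 = x 1 + (if k = 0 then 0 else 1) := by
  fin_cases k <;> simp [funext_iff, Fin.forall_fin_two, latE]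

theorem adj_split (x y : ZLat 2) (r : ℝ) :
    (if latDist x y = 1 then r else 0) =
      (if y = x + latE 0 then r else 0) + (if y = x + latE 1 then r else 0) +
      ((if x = y + latE 0 then r else 0) + (if x = y + latE 1 then r else 0)) := by
  simp only [latDist_two, eq_add_iff]
  simp only [if_true, one_ne_zero, if_false, add_zero]
  split_ifs <;> first | omega | simp

theorem QQ_eq (a : Fin 5 → NNReal) (φ : Fin 5 → ZLat 2) :
    QQ a φ = 2 * (∑ i, ∑ j, if φ j = φ i + latE 0 then (a i : ℝ) * a j else 0) +
      2 * (∑ i, ∑ j, if φ j = φ i + latE 1 then (a i : ℝ) * a j else 0) := by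
  have hc : ∀ k, (∑ i, ∑ j, if φ i = φ j + latE k then (a i : ℝ) * a j else 0) =
      ∑ i, ∑ j, if φ j = φ i + latE k then (a i : ℝ) * a j else 0 := by
    intro k
    rw [Finset.sum_comm]
    refine Finset.sum_congr rfl fun i _ => Finset.sum_congr rfl fun j _ => ?_
    rw [mul_comm]
  unfold QQ
  simp only [adj_split, Finset.sum_add_distrib, hc]
  ring

theorem energy_param {a : Fin 5 → NNReal} {φ : Fin 5 → ZLat 2} {v : ZLat 2 → NNReal}
    (hφ : Function.Injective φ) (hv : Param a φ v) :
    gradEnergy 2 2 v = ENNReal.ofReal (4 * ∑ i, (a i : ℝ) ^ 2 - QQ a φ) ∧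
      0 ≤ 4 * ∑ i, (a i : ℝ) ^ 2 - QQ a φ := by
  have h := (dir_sum hφ hv (latE 0)).add (dir_sum hφ hv (latE 1))
  have hR : 4 * ∑ i, (a i : ℝ) ^ 2 - QQ a φ =
      (2 * ∑ i, (a i : ℝ) ^ 2 - 2 * ∑ i, ∑ j, if φ j = φ i + latE 0 then (a i : ℝ) * a j else 0) +
      (2 * ∑ i, (a i : ℝ) ^ 2 - 2 * ∑ i, ∑ j, if φ j = φ i + latE 1 then (a i : ℝ) * a j else 0) := by
    rw [QQ_eq]; ring
  rw [← hR] at h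
  have hn : ∀ x, 0 ≤ ((v (x + latE 0) : ℝ) - v x) ^ 2 + ((v (x + latE 1) : ℝ) - v x) ^ 2 :=
    fun x => by positivity
  refine ⟨?_, h.nonneg hn⟩
  rw [← h.tsum_eq, ENNReal.ofReal_tsum_of_nonneg hn h.summable]
  unfold gradEnergy
  refine tsum_congr fun x => ?_
  rw [tsum_fintype, Fin.sum_univ_two, ENNReal.ofReal_add (by positivity) (by positivity)]
  simp only [Real.rpow_two, sq_abs]

theorem gradNorm_le {a : Fin 5 → NNReal} {φ ψ : Fin 5 → ZLat 2} {u v : ZLat 2 → NNReal}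
    (hφ : Function.Injective φ) (hψ : Function.Injective ψ) (hu : Param a φ u)
    (hv : Param a ψ v) (h : QQ a φ ≤ QQ a ψ) : gradNorm 2 2 v ≤ gradNorm 2 2 u := by
  unfold gradNorm
  refine ENNReal.rpow_le_rpow ?_ (by norm_num)
  rw [(energy_param hφ hu).1, (energy_param hψ hv).1]
  exact ENNReal.ofReal_le_ofReal (by linarith)

theorem gradNorm_lt {a : Fin 5 → NNReal} {φ ψ : Fin 5 → ZLat 2} {u v : ZLat 2 → NNReal}
    (hφ : Function.Injective φ) (hψ : Function.Injective ψ) (hu : Param a φ u)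
    (hv : Param a ψ v) (h : QQ a φ < QQ a ψ) : gradNorm 2 2 v < gradNorm 2 2 u := by
  unfold gradNorm
  refine ENNReal.rpow_lt_rpow ?_ (by norm_num)
  rw [(energy_param hφ hu).1, (energy_param hψ hv).1]
  have := (energy_param hψ hv).2
  exact (ENNReal.ofReal_lt_ofReal_iff (by linarith)).2 (by linarith)

theorem QQ_lt {a : Fin 5 → NNReal} (ha : ∀ i, a i ≠ 0) {φ ψ : Fin 5 → ZLat 2}
    (h : ∀ i j, latDist (φ i) (φ j) = 1 → latDist (ψ i) (ψ j) = 1)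
    (hs : ¬ ∀ i j, latDist (ψ i) (ψ j) = 1 → latDist (φ i) (φ j) = 1) : QQ a φ < QQ a ψ := by
  push Not at hs
  obtain ⟨i, j, h1, h2⟩ := hs
  have hp : ∀ i j, 0 < (a i : ℝ) * a j := fun i j =>
    mul_pos (by exact_mod_cast pos_iff_ne_zero.2 (ha i)) (by exact_mod_cast pos_iff_ne_zero.2 (ha j))
  have hle : ∀ i j, (if latDist (φ i) (φ j) = 1 then (a i : ℝ) * a j else 0) ≤
      if latDist (ψ i) (ψ j) = 1 then (a i : ℝ) * a j else 0 := by
    intro i j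
    have := hp i j
    split_ifs with h3 h4 <;> first | linarith | exact absurd (h _ _ h3) h4
  unfold QQ
  refine Finset.sum_lt_sum (fun i _ => Finset.sum_le_sum fun j _ => hle i j) ⟨i, Finset.mem_univ _, ?_⟩
  refine Finset.sum_lt_sum (fun j _ => hle i j) ⟨j, Finset.mem_univ _, ?_⟩
  rw [if_neg h2, if_pos h1]
  exact hp i j

theorem exists_max (a : Fin 5 → NNReal) (φ₀ : Fin 5 → ZLat 2) (h₀ : Function.Injective φ₀) :
    ∃ φ, Function.Injective φ ∧ ∀ ψ, Function.Injective ψ → QQ a ψ ≤ QQ a φ := by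
  classical
  let F : (Fin 5 → Fin 5 → Prop) → ℝ := fun B => ∑ i, ∑ j, if B i j then (a i : ℝ) * a j else 0
  have hfin : (QQ a '' {φ | Function.Injective φ}).Finite := by
    refine (Set.finite_range F).subset ?_
    rintro _ ⟨φ, -, rfl⟩
    refine ⟨fun i j => latDist (φ i) (φ j) = 1, ?_⟩
    simp only [F, QQ]
    congr!
  obtain ⟨m, ⟨φ, hφ, rfl⟩, hm⟩ := Set.exists_max_image _ id hfin ⟨_, φ₀, h₀, rfl⟩
  exact ⟨φ, hφ, fun ψ hψ => hm _ ⟨ψ, hψ, rfl⟩⟩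


/-! ### Equimeasurable functions are reparametrizations -/

theorem exists_gap {u v : ZLat 2 → NNReal} (hu : (Function.support u).Finite)
    (hv : (Function.support v).Finite) {c : NNReal} (hc : 0 < c) :
    ∃ t : NNReal, 0 < t ∧ {x | u x = c} = {x | t < u x} \ {x | c < u x} ∧
      {x | v x = c} = {x | t < v x} \ {x | c < v x} ∧ t < c := by
  have hr : ∀ w : ZLat 2 → NNReal, (Function.support w).Finite → (Set.range w).Finite := by
    intro w hw
    refine ((hw.image w).insert 0).subset ?_
    rintro _ ⟨x, rfl⟩
    by_cases h : w x = 0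
    · exact Or.inl h
    · exact Or.inr ⟨x, h, rfl⟩
  have hT : (insert (c / 2) (Set.range u ∪ Set.range v) ∩ Set.Iio c).Finite :=
    (((hr u hu).union (hr v hv)).insert _).inter_of_left _
  have h2 : c / 2 < c := NNReal.half_lt_self hc.ne'
  obtain ⟨t, ⟨-, htc⟩, ht⟩ := Set.exists_max_image _ id hT ⟨c / 2, Set.mem_insert _ _, h2⟩
  have htc : t < c := htc
  have key : ∀ w : ZLat 2 → NNReal, (∀ x, w x ∈ Set.range u ∪ Set.range v) →
      {x | w x = c} = {x | t < w x} \ {x | c < w x} := by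
    intro w hw
    ext x
    simp only [Set.mem_ofPred_eq, Set.mem_sdiff, not_lt]
    constructor
    · intro h; rw [h]; exact ⟨htc, le_rfl⟩
    · rintro ⟨h1, h3⟩
      by_contra h
      have := ht (w x) ⟨Or.inr (hw x), lt_of_le_of_ne h3 h⟩
      exact absurd h1 (not_lt.2 this)
  refine ⟨t, lt_of_lt_of_le (half_pos hc) (ht _ ⟨Set.mem_insert _ _, h2⟩),
    key u fun x => Or.inl ⟨x, rfl⟩, key v fun x => Or.inr ⟨x, rfl⟩, htc⟩

theorem finite_support_of_equi {u v : ZLat 2 → NNReal} (hfin : (Function.support u).Finite)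
    (h : Equimeasurable u v) : (Function.support v).Finite := by
  have hsub : ∀ t : NNReal, {x | t < u x} ⊆ Function.support u := by
    intro t x hx
    exact (lt_of_le_of_lt zero_le hx).ne'
  have hcard : ∀ t : NNReal, 0 < t → {x | t < v x}.Finite ∧
      {x | t < v x}.ncard = {x | t < u x}.ncard := by
    intro t ht
    obtain ⟨e⟩ := h t ht
    have hf : Finite {x | t < u x} := hfin.subset (hsub t)
    exact ⟨Finite.of_equiv _ e, (Nat.card_congr e).symm⟩
  obtain ⟨t₀, h0, ht₀⟩ : ∃ t₀ : NNReal, 0 < t₀ ∧ Function.support u ⊆ {x | t₀ < u x} := by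
    by_cases hne : (Function.support u).Nonempty
    · obtain ⟨x, hx, hm⟩ := Set.exists_min_image _ u hfin hne
      have hx : u x ≠ 0 := hx
      exact ⟨u x / 2, half_pos (pos_iff_ne_zero.2 hx), fun y hy =>
        lt_of_lt_of_le (NNReal.half_lt_self hx) (hm y hy)⟩
    · exact ⟨1, one_pos, fun y hy => absurd ⟨y, hy⟩ hne⟩
  refine (hcard t₀ h0).1.subset ?_
  intro x hx
  have hx : v x ≠ 0 := hx
  have hp : 0 < min t₀ (v x / 2) := lt_min h0 (half_pos (pos_iff_ne_zero.2 hx))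
  have hs : {y | t₀ < v y} ⊆ {y | min t₀ (v x / 2) < v y} :=
    fun y hy => by
      have hy : t₀ < v y := hy
      exact (lt_of_le_of_lt (min_le_left _ _) hy : min t₀ (v x / 2) < v y)
  have he : {y | t₀ < v y} = {y | min t₀ (v x / 2) < v y} := by
    refine Set.eq_of_subset_of_ncard_le hs ?_ (hcard _ hp).1
    rw [(hcard _ hp).2, (hcard _ h0).2]
    exact Set.ncard_le_ncard ((hsub _).trans ht₀) (hfin.subset (hsub _))
  rw [he]
  exact lt_of_le_of_lt (min_le_right _ _) (NNReal.half_lt_self hx)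

theorem exists_equiv {u v : ZLat 2 → NNReal} (hfin : (Function.support u).Finite)
    (h : Equimeasurable u v) :
    ∃ E : Function.support u ≃ Function.support v, ∀ x, v (E x).1 = u x.1 := by
  have hv := finite_support_of_equi hfin h
  have hfib : ∀ c : NNReal, Nonempty ({x : Function.support u // u x.1 = c} ≃
      {x : Function.support v // v x.1 = c}) := by
    intro c
    by_cases hc : c = 0
    · subst hc
      have h1 : IsEmpty {x : Function.support u // u x.1 = 0} := ⟨fun x => x.1.2 x.2⟩
      have h2 : IsEmpty {x : Function.support v // v x.1 = 0} := ⟨fun x => x.1.2 x.2⟩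
      exact ⟨Equiv.equivOfIsEmpty _ _⟩
    have hc0 : 0 < c := pos_iff_ne_zero.2 hc
    obtain ⟨t, ht, hu', hv', htc⟩ := exists_gap hfin hv hc0
    have fib : ∀ w : ZLat 2 → NNReal, Nonempty ({x : Function.support w // w x.1 = c} ≃
        {x | w x = c}) := fun w =>
      ⟨⟨fun x => ⟨x.1.1, x.2⟩, fun x => ⟨⟨x.1, by
        have h3 : w x.1 = c := x.2
        simp [h3, hc]⟩, x.2⟩, fun _ => rfl, fun _ => rfl⟩⟩
    obtain ⟨e1⟩ := fib u
    obtain ⟨e2⟩ := fib v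
    have hsup : ∀ (w : ZLat 2 → NNReal) (s : NNReal), {x | s < w x} ⊆ Function.support w :=
      fun w s x hx => (lt_of_le_of_lt zero_le hx).ne'
    have hn : ∀ s : NNReal, 0 < s → {x | s < u x}.ncard = {x | s < v x}.ncard := by
      intro s hs
      obtain ⟨e⟩ := h s hs
      exact Nat.card_congr e
    have hlt : ∀ w : ZLat 2 → NNReal, {x | c < w x} ⊆ {x | t < w x} := by
      intro w x hx
      have hx : c < w x := hx
      exact (lt_trans htc hx : t < w x)
    have hcard : {x | u x = c}.ncard = {x | v x = c}.ncard := by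
      rw [hu', hv', Set.ncard_sdiff (hlt _) (hfin.subset (hsup _ _)),
        Set.ncard_sdiff (hlt _) (hv.subset (hsup _ _)), hn t ht, hn c hc0]
    have f1 : Finite {x | u x = c} := by
      rw [hu']; exact (hfin.subset (hsup u t)).sdiff
    have f2 : Finite {x | v x = c} := by
      rw [hv']; exact (hv.subset (hsup v t)).sdiff
    exact ⟨e1.trans (((Finite.card_eq.1 hcard).some).trans e2.symm)⟩
  refine ⟨Equiv.ofFiberEquiv (f := fun x : Function.support u => u x.1)
    (g := fun x : Function.support v => v x.1) fun c => (hfib c).some, fun x => ?_⟩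
  exact Equiv.ofFiberEquiv_map (f := fun x : Function.support u => u x.1)
    (g := fun x : Function.support v => v x.1) _ x

theorem exists_param_self {u : ZLat 2 → NNReal} (hfin : (Function.support u).Finite)
    (hcard : (Function.support u).ncard = 5) :
    ∃ a : Fin 5 → NNReal, (∀ i, a i ≠ 0) ∧ ∀ v, Equimeasurable u v →
      ∃ φ : Fin 5 → ZLat 2, Function.Injective φ ∧ Param a φ v := by
  have : Finite (Function.support u) := hfin
  let e : Fin 5 ≃ Function.support u := (Finite.equivFinOfCardEq hcard).symm
  refine ⟨fun i => u (e i).1, fun i => (e i).2, fun v hv => ?_⟩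
  obtain ⟨E, hE⟩ := exists_equiv hfin hv
  refine ⟨fun i => (E (e i)).1, fun i j hij => ?_, fun i => hE _, fun x hx => ?_⟩
  · exact e.injective (E.injective (Subtype.ext hij))
  · by_contra hne
    exact hx ⟨e.symm (E.symm ⟨x, hne⟩), by simp⟩

/-! ### Geometry of five points -/

theorem ne_iff (x y : ZLat 2) : x ≠ y ↔ x 0 ≠ y 0 ∨ x 1 ≠ y 1 := by
  rw [Ne, funext_iff, Fin.forall_fin_two]; tauto

theorem adj_cases {x y : ZLat 2} (h : latDist x y = 1) :
    (y 0 = x 0 + 1 ∧ y 1 = x 1) ∨ (y 0 = x 0 - 1 ∧ y 1 = x 1) ∨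
    (y 0 = x 0 ∧ y 1 = x 1 + 1) ∨ (y 0 = x 0 ∧ y 1 = x 1 - 1) := by
  rw [latDist_two] at h; omega

theorem adj_comm (x y : ZLat 2) : latDist x y = latDist y x := by
  rw [latDist_two, latDist_two]; omega

theorem common_nbr {x y a b : ZLat 2} (hxy : x ≠ y) (hab : a ≠ b) (h1 : latDist x a = 1)
    (h2 : latDist x b = 1) (h3 : latDist y a = 1) (h4 : latDist y b = 1) :
    a 0 + b 0 = x 0 + y 0 ∧ a 1 + b 1 = x 1 + y 1 := by
  rw [ne_iff] at hxy hab
  rw [latDist_two] at h3 h4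
  rcases adj_cases h1 with h1 | h1 | h1 | h1 <;> rcases adj_cases h2 with h2 | h2 | h2 | h2 <;>
    omega

theorem no_K23 {x y a b c : ZLat 2} (hxy : x ≠ y) (hab : a ≠ b) (hac : a ≠ c) (hbc : b ≠ c)
    (h1 : latDist x a = 1) (h2 : latDist x b = 1) (h3 : latDist x c = 1)
    (h4 : latDist y a = 1) (h5 : latDist y b = 1) (h6 : latDist y c = 1) : False := by
  have := common_nbr hxy hab h1 h2 h4 h5
  have := common_nbr hxy hac h1 h3 h4 h6
  rw [ne_iff] at hbc
  omega

/-- Signed translation. -/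
def sgnEquiv (p : ZLat 2) (a b : ℤˣ) : ZLat 2 ≃ ZLat 2 where
  toFun x := ![a * (x 0 - p 0), b * (x 1 - p 1)]
  invFun y := ![a * y 0 + p 0, b * y 1 + p 1]
  left_inv x := by
    ext i; fin_cases i <;> simp [← mul_assoc, ← Units.val_mul]
  right_inv x := by
    ext i; fin_cases i <;> simp [← mul_assoc, ← Units.val_mul]

def swapEquiv : ZLat 2 ≃ ZLat 2 where
  toFun x := ![x 1, x 0]
  invFun x := ![x 1, x 0]
  left_inv x := by ext i; fin_cases i <;> simp
  right_inv x := by ext i; fin_cases i <;> simp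

theorem sgn_auto (p : ZLat 2) (a b : ℤˣ) : IsLatAuto (sgnEquiv p a b) := by
  intro x y
  simp only [latDist_two, sgnEquiv, Equiv.coe_fn_mk, Matrix.cons_val_zero, Matrix.cons_val_one]
  rcases Int.units_eq_one_or a with rfl | rfl <;> rcases Int.units_eq_one_or b with rfl | rfl <;>
    simp only [Units.val_one, Units.val_neg] <;> omega

theorem swap_auto : IsLatAuto swapEquiv := by
  intro x y
  simp only [latDist_two, swapEquiv, Equiv.coe_fn_mk, Matrix.cons_val_zero, Matrix.cons_val_one]
  omega

theorem auto_trans {σ τ : ZLat 2 ≃ ZLat 2} (h1 : IsLatAuto σ) (h2 : IsLatAuto τ) :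
    IsLatAuto (σ.trans τ) := fun x y => by
  simp only [Equiv.trans_apply]; rw [h2, h1]

theorem eq_vec (x : ZLat 2) (a b : ℤ) (h0 : x 0 = a) (h1 : x 1 = b) : x = ![a, b] := by
  ext i; fin_cases i <;> simp [h0, h1]

theorem normalize {x y : ZLat 2} (h : latDist x y = 1) :
    ∃ σ : ZLat 2 ≃ ZLat 2, IsLatAuto σ ∧ σ x = ![0, 0] ∧ σ y = ![0, -1] := by
  rcases adj_cases h with h | h | h | h
  · refine ⟨(sgnEquiv x (-1) 1).trans swapEquiv, auto_trans (sgn_auto _ _ _) swap_auto, ?_, ?_⟩ <;>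
      simp [sgnEquiv, swapEquiv, h.1, h.2]
  · refine ⟨(sgnEquiv x 1 1).trans swapEquiv, auto_trans (sgn_auto _ _ _) swap_auto, ?_, ?_⟩ <;>
      simp [sgnEquiv, swapEquiv, h.1, h.2]
  · refine ⟨sgnEquiv x 1 (-1), sgn_auto _ _ _, ?_, ?_⟩ <;> simp [sgnEquiv, h.1, h.2]
  · refine ⟨sgnEquiv x 1 1, sgn_auto _ _ _, ?_, ?_⟩ <;> simp [sgnEquiv, h.1, h.2]

theorem image_eq {χ : Fin 5 → ZLat 2} (hχ : Function.Injective χ) (σ : ZLat 2 ≃ ZLat 2)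
    {p q r s t : ZLat 2} (h : ∀ k, σ (χ k) ∈ ({p, q, r, s, t} : Set (ZLat 2))) :
    σ '' Set.range χ = {p, q, r, s, t} := by
  classical
  have hc : ({p, q, r, s, t} : Set (ZLat 2)) = (({p, q, r, s, t} : Finset (ZLat 2)) : Set _) := by
    simp
  refine Set.eq_of_subset_of_ncard_le ?_ ?_ (by rw [hc]; exact Finset.finite_toSet _)
  · rintro _ ⟨_, ⟨k, rfl⟩, rfl⟩
    exact h k
  · rw [Set.ncard_image_of_injective _ σ.injective, ← Set.image_univ,
      Set.ncard_image_of_injective _ hχ, Set.ncard_univ, Nat.card_eq_fintype_card,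
      Fintype.card_fin, hc, Set.ncard_coe_finset]
    exact Finset.card_le_five

theorem star_geom {χ : Fin 5 → ZLat 2} (hχ : Function.Injective χ)
    (h : ∀ k, k ≠ 0 → latDist (χ 0) (χ k) = 1) :
    ∃ σ : ZLat 2 ≃ ZLat 2, IsLatAuto σ ∧ σ '' Set.range χ = Vdia1 := by
  refine ⟨sgnEquiv (χ 0) 1 1, sgn_auto _ _ _, image_eq hχ _ fun k => ?_⟩
  by_cases hk : k = 0
  · subst hk; simp [sgnEquiv]
  · rcases adj_cases (h k hk) with h | h | h | h <;> simp [sgnEquiv, h.1, h.2]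

theorem P_geom {χ : Fin 5 → ZLat 2} (hχ : Function.Injective χ)
    (h02 : latDist (χ 0) (χ 2) = 1) (h03 : latDist (χ 0) (χ 3) = 1)
    (h04 : latDist (χ 0) (χ 4) = 1) (h12 : latDist (χ 1) (χ 2) = 1)
    (h13 : latDist (χ 1) (χ 3) = 1) :
    ∃ σ : ZLat 2 ≃ ZLat 2, IsLatAuto σ ∧ σ '' Set.range χ = Omega5 := by
  obtain ⟨τ, hτ, ht0, ht4⟩ := normalize h04
  rw [← hτ] at h02 h03 h12 h13
  have n01 : τ (χ 0) ≠ τ (χ 1) := fun h => by simpa using hχ (τ.injective h)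
  have n23 : τ (χ 2) ≠ τ (χ 3) := fun h => by simpa using hχ (τ.injective h)
  have n24 : τ (χ 2) ≠ τ (χ 4) := fun h => by simpa using hχ (τ.injective h)
  have n34 : τ (χ 3) ≠ τ (χ 4) := fun h => by simpa using hχ (τ.injective h)
  obtain ⟨c0, c1⟩ := common_nbr n01 n23 h02 h03 h12 h13
  have a2 := adj_cases h02
  have a3 := adj_cases h03
  rw [ne_iff] at n01 n23 n24 n34
  have z0 : τ (χ 0) 0 = 0 := by rw [ht0]; rfl
  have z1 : τ (χ 0) 1 = 0 := by rw [ht0]; rfl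
  have w0 : τ (χ 4) 0 = 0 := by rw [ht4]; rfl
  have w1 : τ (χ 4) 1 = -1 := by rw [ht4]; rfl
  simp only [z0, z1] at a2 a3 n01 c0 c1
  simp only [w0, w1] at n24 n34
  have key : ∃ s : ℤˣ, (s : ℤ) * τ (χ 1) 0 = 1 ∧ τ (χ 1) 1 = 1 ∧
      (((s : ℤ) * τ (χ 2) 0 = 1 ∧ τ (χ 2) 1 = 0 ∧ (s : ℤ) * τ (χ 3) 0 = 0 ∧ τ (χ 3) 1 = 1) ∨
       ((s : ℤ) * τ (χ 3) 0 = 1 ∧ τ (χ 3) 1 = 0 ∧ (s : ℤ) * τ (χ 2) 0 = 0 ∧ τ (χ 2) 1 = 1)) := by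
    clear h02 h03 h12 h13 h04 ht0 ht4 z0 z1 w0 w1
    generalize τ (χ 1) 0 = p0 at *
    generalize τ (χ 1) 1 = p1 at *
    generalize τ (χ 2) 0 = q0 at *
    generalize τ (χ 2) 1 = q1 at *
    generalize τ (χ 3) 0 = r0 at *
    generalize τ (χ 3) 1 = r1 at *
    have hp0 : p0 = q0 + r0 := by omega
    have hp1 : p1 = q1 + r1 := by omega
    subst hp0 hp1
    rcases a2 with ⟨rfl, rfl⟩ | ⟨rfl, rfl⟩ | ⟨rfl, rfl⟩ | ⟨rfl, rfl⟩ <;>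
      rcases a3 with ⟨rfl, rfl⟩ | ⟨rfl, rfl⟩ | ⟨rfl, rfl⟩ | ⟨rfl, rfl⟩ <;>
      first
        | (exfalso; simp at n01 n23 n24 n34; done)
        | (refine ⟨1, ?_⟩; norm_num; done)
        | (refine ⟨-1, ?_⟩; norm_num; done)
  obtain ⟨s, k1, k2, k3⟩ := key
  refine ⟨τ.trans (sgnEquiv 0 s 1), auto_trans hτ (sgn_auto _ _ _), image_eq hχ _ fun k => ?_⟩
  have ev : (τ.trans (sgnEquiv 0 s 1)) (χ k) = ![s * τ (χ k) 0, τ (χ k) 1] := by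
    simp [sgnEquiv]
  rw [ev]
  fin_cases k
  · simp [z0, z1]
  · simp [k1, k2]
  · rcases k3 with ⟨e1, e2, e3, e4⟩ | ⟨e1, e2, e3, e4⟩
    · simp [e1, e2]
    · simp only [Fin.reduceFinMk, e3, e4]; simp
  · rcases k3 with ⟨e1, e2, e3, e4⟩ | ⟨e1, e2, e3, e4⟩
    · simp only [Fin.reduceFinMk, e3, e4]; simp
    · simp [e1, e2]
  · simp [w0, w1]

def starP : Fin 5 → ZLat 2 := ![![0,0], ![1,0], ![-1,0], ![0,1], ![0,-1]]
def houseP : Fin 5 → ZLat 2 := ![![0,0], ![1,1], ![1,0], ![0,1], ![0,-1]]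

theorem starP_inj : Function.Injective starP := by unfold Function.Injective starP; decide
theorem houseP_inj : Function.Injective houseP := by unfold Function.Injective houseP; decide

theorem star_adj : ∀ i j, latDist (starP i) (starP j) = 1 ↔ ((i = 0 ∧ j ≠ 0) ∨ (i ≠ 0 ∧ j = 0)) := by
  simp only [latDist_two]; unfold starP; decide

theorem house_adj : ∀ i j, latDist (houseP i) (houseP j) = 1 ↔
    ((i.val < 2 ∧ 2 ≤ j.val) ∨ (2 ≤ i.val ∧ j.val < 2)) ∧ ¬ (i = 1 ∧ j = 4) ∧ ¬ (i = 4 ∧ j = 1) := by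
  simp only [latDist_two]; unfold houseP; decide

def par (x : ZLat 2) : Bool := decide ((x 0 + x 1) % 2 = 0)

theorem par_ne {x y : ZLat 2} (h : latDist x y = 1) : par x ≠ par y := by
  intro hp
  simp only [par, decide_eq_decide] at hp
  have := adj_cases h
  omega

theorem perm_exists : ∀ c : Fin 5 → Bool, ∃ π : Equiv.Perm (Fin 5),
    (c (π 1) = c (π 2) ∧ c (π 1) = c (π 3) ∧ c (π 1) = c (π 4)) ∨
    (c (π 0) = c (π 1) ∧ c (π 2) = c (π 3) ∧ c (π 2) = c (π 4)) := by
  decide +kernel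

/-- The conclusion of the geometric dichotomy. -/
def Good (φ : Fin 5 → ZLat 2) : Prop :=
  (∃ σ : ZLat 2 ≃ ZLat 2, IsLatAuto σ ∧
    (σ '' Set.range φ = Vdia1 ∨ σ '' Set.range φ = Omega5)) ∨
  ∃ ψ : Fin 5 → ZLat 2, Function.Injective ψ ∧
    (∀ i j, latDist (φ i) (φ j) = 1 → latDist (ψ i) (ψ j) = 1) ∧
    ¬ ∀ i j, latDist (ψ i) (ψ j) = 1 → latDist (φ i) (φ j) = 1

theorem good_of_perm {φ : Fin 5 → ZLat 2} (π : Equiv.Perm (Fin 5)) (h : Good (φ ∘ π)) :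
    Good φ := by
  rcases h with ⟨σ, h1, h2⟩ | ⟨ψ, h1, h2, h3⟩
  · left
    rw [π.surjective.range_comp] at h2
    exact ⟨σ, h1, h2⟩
  · right
    refine ⟨ψ ∘ π.symm, h1.comp π.symm.injective, fun i j hij => h2 _ _ (by simpa using hij),
      fun h => h3 fun i j hij => h _ _ (by simpa using hij)⟩

theorem good_star {χ : Fin 5 → ZLat 2} (hχ : Function.Injective χ)
    (h1 : par (χ 1) = par (χ 2)) (h2 : par (χ 1) = par (χ 3)) (h3 : par (χ 1) = par (χ 4)) :
    Good χ := by
  by_cases h : ∀ i j, latDist (starP i) (starP j) = 1 → latDist (χ i) (χ j) = 1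
  · left
    obtain ⟨σ, hσ, he⟩ := star_geom hχ fun k hk => h _ _ ((star_adj 0 k).2 (Or.inl ⟨rfl, hk⟩))
    exact ⟨σ, hσ, Or.inl he⟩
  · right
    refine ⟨starP, starP_inj, fun i j hij => ?_, h⟩
    have hp := par_ne hij
    rw [star_adj]
    fin_cases i <;> fin_cases j <;> first | (simp; done) | (exfalso; apply hp; simp_all)

theorem good_house {χ : Fin 5 → ZLat 2} (hχ : Function.Injective χ)
    (h1 : par (χ 0) = par (χ 1)) (h2 : par (χ 2) = par (χ 3)) (h3 : par (χ 2) = par (χ 4))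
    (hn : latDist (χ 1) (χ 4) ≠ 1) : Good χ := by
  by_cases h : ∀ i j, latDist (houseP i) (houseP j) = 1 → latDist (χ i) (χ j) = 1
  · left
    obtain ⟨σ, hσ, he⟩ := P_geom hχ (h _ _ ((house_adj 0 2).2 (by decide)))
      (h _ _ ((house_adj 0 3).2 (by decide))) (h _ _ ((house_adj 0 4).2 (by decide)))
      (h _ _ ((house_adj 1 2).2 (by decide))) (h _ _ ((house_adj 1 3).2 (by decide)))
    exact ⟨σ, hσ, Or.inr he⟩
  · right
    refine ⟨houseP, houseP_inj, fun i j hij => ?_, h⟩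
    have hp := par_ne hij
    have hn' : latDist (χ 4) (χ 1) ≠ 1 := by rwa [adj_comm]
    rw [house_adj]
    fin_cases i <;> fin_cases j <;>
      first | (simp; done) | (exfalso; apply hp; simp_all)

theorem good_all {φ : Fin 5 → ZLat 2} (hφ : Function.Injective φ) : Good φ := by
  obtain ⟨π, ⟨h1, h2, h3⟩ | ⟨h1, h2, h3⟩⟩ := perm_exists (fun i => par (φ i))
  · exact good_of_perm π (good_star (hφ.comp π.injective) h1 h2 h3)
  · apply good_of_perm π
    have hχ := hφ.comp π.injective
    generalize hg : φ ∘ π = χ at hχ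
    have e : ∀ k, φ (π k) = χ k := fun k => by rw [← hg]; rfl
    simp only [e] at h1 h2 h3
    have main : ∀ i j : Fin 5, i.val < 2 → 2 ≤ j.val → latDist (χ i) (χ j) ≠ 1 → Good χ := by
      intro i j hi hj hn
      apply good_of_perm (Equiv.swap i 1 * Equiv.swap j 4)
      have hc := hχ.comp (Equiv.swap i 1 * Equiv.swap j 4).injective
      fin_cases i <;> fin_cases j <;> first | (exfalso; simp at hi; done) | (exfalso; simp at hj; done) | skip
      all_goals
        apply good_house hc <;> simp [Equiv.swap_apply_def] <;> simp_all
    by_contra hG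
    have hadj : ∀ i j : Fin 5, i.val < 2 → 2 ≤ j.val → latDist (χ i) (χ j) = 1 :=
      fun i j hi hj => by
        by_contra hn
        exact hG (main i j hi hj hn)
    have ne : ∀ i j : Fin 5, i ≠ j → χ i ≠ χ j := fun i j h => hχ.ne h
    exact no_K23 (ne 0 1 (by decide)) (ne 2 3 (by decide)) (ne 2 4 (by decide))
      (ne 3 4 (by decide)) (hadj 0 2 (by decide) (by decide)) (hadj 0 3 (by decide) (by decide))
      (hadj 0 4 (by decide) (by decide)) (hadj 1 2 (by decide) (by decide))
      (hadj 1 3 (by decide) (by decide)) (hadj 1 4 (by decide) (by decide))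

end S5

/-- For `u` of support size 5, the minimal Sobolev energy among equimeasurable functions
is attained, and the support of every minimizer is mapped by a graph automorphism of ℤ²
onto V◇₁ or onto Ω = {(0,0),(0,1),(1,0),(0,−1),(1,1)}. -/
theorem stmt1 (u : ZLat 2 → NNReal) (hfin : (Function.support u).Finite)
    (hcard : (Function.support u).ncard = 5) :
    (∃ u' : ZLat 2 → NNReal, Equimeasurable u u' ∧
      gradNorm 2 2 u' = ⨅ (v : ZLat 2 → NNReal) (_ : Equimeasurable u v), gradNorm 2 2 v) ∧
    (∀ u' : ZLat 2 → NNReal, Equimeasurable u u' →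
      gradNorm 2 2 u' = (⨅ (v : ZLat 2 → NNReal) (_ : Equimeasurable u v), gradNorm 2 2 v) →
      ∃ σ : ZLat 2 ≃ ZLat 2, IsLatAuto σ ∧
        (σ '' Function.support u' = Vdia1 ∨ σ '' Function.support u' = Omega5)) := by
  obtain ⟨a, ha, hpar⟩ := S5.exists_param_self hfin hcard
  obtain ⟨φ₀, hφ₀, hu⟩ := hpar u fun t _ => ⟨Equiv.refl _⟩
  constructor
  · obtain ⟨φ, hφ, hmax⟩ := S5.exists_max a φ₀ hφ₀
    obtain ⟨w, hw⟩ := S5.exists_param a φ hφ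
    have hequi := S5.equi_of_param hφ₀ hφ hu hw
    refine ⟨w, hequi, le_antisymm (le_iInf₂ fun v hv => ?_) (iInf₂_le w hequi)⟩
    obtain ⟨ψ, hψ, hvp⟩ := hpar v hv
    exact S5.gradNorm_le hψ hφ hvp hw (hmax ψ hψ)
  · intro w hequi hmin
    obtain ⟨φ, hφ, hw⟩ := hpar w hequi
    rw [S5.support_param ha hw]
    rcases S5.good_all hφ with h | ⟨ψ, hψ, h1, h2⟩
    · exact h
    · exfalso
      obtain ⟨v, hv⟩ := S5.exists_param a ψ hψ
      have hlt := S5.gradNorm_lt hφ hψ hw hv (S5.QQ_lt ha h1 h2)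
      rw [hmin] at hlt
      exact absurd hlt (not_lt.2 (iInf₂_le v (S5.equi_of_param hφ₀ hψ hu hv)))

end
end

section
/- Let d ≥ 2 and let u : ℤ^d → [0,∞) be finitely supported. Then there exists K ∈ ℕ such that R_e(R^K u) = R^K u for every e ∈ E⃗ (in particular R^k u = R^K u for all k ≥ K). -/
open Filter Topology

noncomputable section

/-! ### Abstract rearrangement of finite sets -/

lemma aux_nthLargest {α : Type*} (v : α → NNReal) (hv : (Function.support v).Finite)
    (n : ℕ) (hn : 1 ≤ n) (t : NNReal) :
    t < nthLargest v n ↔ n ≤ Set.ncard {x | t < v x} := by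
  have hfin : {x | t < v x}.Finite := hv.subset (fun x hx => by
    simp only [Set.mem_ofPred_eq] at hx
    exact (lt_of_le_of_lt zero_le hx).ne')
  unfold nthLargest
  constructor
  · intro h
    have hne : {t | ∃ Ω : Finset α, Ω.card = n ∧ ∀ x ∈ Ω, t ≤ v x}.Nonempty := by
      by_contra hcon
      rw [Set.not_nonempty_iff_eq_empty] at hcon
      rw [hcon] at h
      simp at h
    obtain ⟨s, ⟨Ω, hc, hΩ⟩, hs⟩ := exists_lt_of_lt_csSup hne h
    rw [← hc, ← Set.ncard_coe_finset]
    exact Set.ncard_le_ncard (fun x hx => lt_of_lt_of_le hs (hΩ x hx)) hfin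
  · intro h
    rw [Set.ncard_eq_toFinset_card _ hfin] at h
    obtain ⟨Ω, hsub, hc⟩ := Finset.exists_subset_card_eq h
    have hne : Ω.Nonempty := by
      rw [← Finset.card_pos]; omega
    obtain ⟨x0, hx0, hmin⟩ := Finset.exists_min_image Ω v hne
    have h1 : t < v x0 := by
      have := hsub hx0
      simpa using this
    refine lt_of_lt_of_le h1 (le_csSup ?_ ⟨Ω, hc, hmin⟩)
    refine ⟨∑ x ∈ hv.toFinset, v x, ?_⟩
    rintro s ⟨Ω', hc', hΩ'⟩
    have hne' : Ω'.Nonempty := by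
      rw [← Finset.card_pos]; omega
    obtain ⟨y, hy⟩ := hne'
    refine (hΩ' y hy).trans ?_
    by_cases hy0 : v y = 0
    · rw [hy0]; exact zero_le
    · exact Finset.single_le_sum (f := v) (fun _ _ => zero_le) (by simpa using hy0)

open Classical in
/-- exchange on one line -/
lemma aux_exchange {α : Type*} (φ : α → ℕ) (A B : Finset α) (hc : A.card = B.card)
    (h : ∀ b ∈ B, ∀ a ∈ A, a ∉ B → φ b < φ a) :
    ∑ x ∈ B, φ x ≤ ∑ x ∈ A, φ x ∧ (∑ x ∈ B, φ x = ∑ x ∈ A, φ x → A = B) := by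
  have hc2 : (A \ B).card = (B \ A).card := by
    have h1 := Finset.card_sdiff_add_card_inter A B
    have h2 := Finset.card_sdiff_add_card_inter B A
    rw [Finset.inter_comm] at h2
    omega
  have e1 : ∑ x ∈ A, φ x = ∑ x ∈ A \ B, φ x + ∑ x ∈ A ∩ B, φ x := by
    rw [add_comm, Finset.sum_inter_add_sum_sdiff]
  have e2 : ∑ x ∈ B, φ x = ∑ x ∈ B \ A, φ x + ∑ x ∈ A ∩ B, φ x := by
    rw [add_comm, Finset.inter_comm, Finset.sum_inter_add_sum_sdiff]
  by_cases hem : (A \ B) = ∅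
  · have hem2 : B \ A = ∅ := by
      rw [← Finset.card_eq_zero, ← hc2, hem]; rfl
    have : A = B := Finset.Subset.antisymm (Finset.sdiff_eq_empty_iff_subset.1 hem)
      (Finset.sdiff_eq_empty_iff_subset.1 hem2)
    subst this
    simp
  · have hne : (A \ B).Nonempty := Finset.nonempty_iff_ne_empty.2 hem
    have hne2 : (B \ A).Nonempty := by
      rw [← Finset.card_pos, ← hc2, Finset.card_pos]; exact hne
    obtain ⟨a0, ha0, hmin⟩ := Finset.exists_min_image (A \ B) φ hne
    have k1 : (A \ B).card * φ a0 ≤ ∑ x ∈ A \ B, φ x := by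
      have := Finset.card_nsmul_le_sum (A \ B) φ (φ a0) hmin
      simpa using this
    have k2 : ∑ x ∈ B \ A, φ x < ∑ x ∈ B \ A, φ a0 := by
      refine Finset.sum_lt_sum_of_nonempty hne2 (fun b hb => ?_)
      rw [Finset.mem_sdiff] at ha0 hb
      exact h b hb.1 a0 ha0.1 ha0.2
    rw [Finset.sum_const, smul_eq_mul, ← hc2] at k2
    constructor
    · omega
    · intro; omega

open Classical in
lemma aux_fiber {α β : Type*} (φ : α → ℕ) (q : α → β) (pos : α → ℕ)
    (hpos : ∀ x, 1 ≤ pos x)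
    (hinj : ∀ x y, q x = q y → pos x = pos y → x = y)
    (hsurj : ∀ x n, 1 ≤ n → ∃ y, q y = q x ∧ pos y = n)
    (hmono : ∀ x y, q x = q y → pos x < pos y → φ x < φ y)
    (A : Finset α) :
    ∃ B : Finset α, (∀ x, x ∈ B ↔ pos x ≤ (A.filter (fun y => q y = q x)).card) ∧
      ∑ x ∈ B, φ x ≤ ∑ x ∈ A, φ x ∧ (∑ x ∈ B, φ x = ∑ x ∈ A, φ x → A = B) := by
  choose! g hg1 hg2 using hsurj
  let k : α → ℕ := fun x => (A.filter (fun y => q y = q x)).card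
  let B : Finset α := A.biUnion (fun a => (Finset.Icc 1 (k a)).image (g a))
  have hB : ∀ x, x ∈ B ↔ pos x ≤ k x := by
    intro x
    simp only [B, Finset.mem_biUnion, Finset.mem_image, Finset.mem_Icc]
    constructor
    · rintro ⟨a, ha, n, ⟨hn1, hn2⟩, rfl⟩
      rw [hg2 a n hn1]
      simp only [k, hg1 a n hn1]
      exact hn2
    · intro hx
      have : 0 < k x := lt_of_lt_of_le (hpos x) hx
      obtain ⟨a, ha⟩ := Finset.card_pos.1 this
      rw [Finset.mem_filter] at ha
      have hk : k a = k x := by simp only [k, ha.2]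
      refine ⟨a, ha.1, pos x, ⟨hpos x, by omega⟩, ?_⟩
      exact hinj _ _ ((hg1 a _ (hpos x)).trans ha.2) (hg2 a _ (hpos x))
  have hqB : ∀ x ∈ B, q x ∈ A.image q := by
    intro x hx
    have : 0 < k x := lt_of_lt_of_le (hpos x) ((hB x).1 hx)
    obtain ⟨a, ha⟩ := Finset.card_pos.1 this
    rw [Finset.mem_filter] at ha
    exact Finset.mem_image.2 ⟨a, ha.1, ha.2⟩
  have hcard : ∀ a, (A.filter (fun y => q y = q a)).card
      = (B.filter (fun y => q y = q a)).card := by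
    intro a
    have : B.filter (fun y => q y = q a) = (Finset.Icc 1 (k a)).image (g a) := by
      ext x
      simp only [Finset.mem_filter, Finset.mem_image, Finset.mem_Icc]
      constructor
      · rintro ⟨hx, hq⟩
        have hk : k x = k a := by simp only [k, hq]
        have := (hB x).1 hx
        exact ⟨pos x, ⟨hpos x, by omega⟩,
          hinj _ _ ((hg1 a _ (hpos x)).trans hq.symm) (hg2 a _ (hpos x))⟩
      · rintro ⟨n, ⟨h1, h2⟩, rfl⟩
        refine ⟨(hB _).2 ?_, hg1 a n h1⟩
        rw [hg2 a n h1]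
        simp only [k, hg1 a n h1]
        exact h2
    rw [this, Finset.card_image_of_injOn]
    · simp [k]
    · intro m hm n hn hmn
      simp only [Finset.coe_Icc, Set.mem_Icc] at hm hn
      have := congrArg pos hmn
      rwa [hg2 a m hm.1, hg2 a n hn.1] at this
  have hline : ∀ a, ∑ x ∈ B.filter (fun y => q y = q a), φ x
        ≤ ∑ x ∈ A.filter (fun y => q y = q a), φ x ∧
      (∑ x ∈ B.filter (fun y => q y = q a), φ x
        = ∑ x ∈ A.filter (fun y => q y = q a), φ x →
        A.filter (fun y => q y = q a) = B.filter (fun y => q y = q a)) := by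
    intro a
    refine aux_exchange φ _ _ (hcard a) ?_
    intro b hb c hc hcB
    rw [Finset.mem_filter] at hb hc hcB
    have hcB' : c ∉ B := fun h => hcB ⟨h, hc.2⟩
    rw [hB] at hcB'
    have h1 := (hB b).1 hb.1
    have hk : k b = k c := by simp only [k, hb.2, hc.2]
    exact hmono b c (hb.2.trans hc.2.symm) (by omega)
  have sA : ∑ x ∈ A, φ x = ∑ l ∈ A.image q, ∑ x ∈ A.filter (fun y => q y = l), φ x :=
    (Finset.sum_fiberwise_of_maps_to (fun x hx => Finset.mem_image_of_mem q hx) φ).symm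
  have sB : ∑ x ∈ B, φ x = ∑ l ∈ A.image q, ∑ x ∈ B.filter (fun y => q y = l), φ x :=
    (Finset.sum_fiberwise_of_maps_to hqB φ).symm
  have hle : ∀ l ∈ A.image q, ∑ x ∈ B.filter (fun y => q y = l), φ x ≤
      ∑ x ∈ A.filter (fun y => q y = l), φ x := by
    intro l hl
    obtain ⟨a, -, rfl⟩ := Finset.mem_image.1 hl
    exact (hline a).1
  refine ⟨B, hB, ?_, ?_⟩
  · rw [sA, sB]; exact Finset.sum_le_sum hle
  · intro heq
    rw [sA, sB] at heq
    have hall := (Finset.sum_eq_sum_iff_of_le hle).1 heq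
    ext x
    constructor
    · intro hx
      have h2 := (hline x).2 (hall (q x) (Finset.mem_image_of_mem q hx))
      have : x ∈ A.filter (fun y => q y = q x) := Finset.mem_filter.2 ⟨hx, rfl⟩
      rw [h2] at this
      exact (Finset.mem_filter.1 this).1
    · intro hx
      obtain ⟨a, ha, hqa⟩ := Finset.mem_image.1 (hqB x hx)
      have h2 := (hline x).2 (hall (q x) (hqB x hx))
      have : x ∈ B.filter (fun y => q y = q x) := Finset.mem_filter.2 ⟨hx, rfl⟩
      rw [← h2] at this
      exact (Finset.mem_filter.1 this).1

/-! ### The energy -/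

def auxC (d : ℕ) (i : Fin d) : ℤ := (d : ℤ) - (i : ℕ)

def auxPhi (d : ℕ) (x : ZLat d) : ℤ :=
  ∑ i, (((d : ℤ) + 1) * x i ^ 2 - auxC d i * x i)

lemma auxC_pos (d : ℕ) (i : Fin d) : 0 < auxC d i := by
  unfold auxC; have := i.2; omega

lemma auxC_lt (d : ℕ) (i : Fin d) : auxC d i < (d : ℤ) + 1 := by
  unfold auxC; omega

lemma auxPhi_nonneg (d : ℕ) (x : ZLat d) : 0 ≤ auxPhi d x := by
  unfold auxPhi
  refine Finset.sum_nonneg (fun i _ => ?_)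
  have h1 := auxC_pos d i
  have h2 := auxC_lt d i
  rcases le_or_gt (x i) 0 with h | h
  · nlinarith [sq_nonneg (x i)]
  · have : x i ≤ x i ^ 2 := by nlinarith
    nlinarith

/-- the integral data of a direction -/
lemma aux_dir (d : ℕ) (e : Fin d → ℝ) (he : e ∈ Evec d) :
    ∃ (w : Fin d → ℤ) (N : ℤ), (N = 1 ∨ N = 2) ∧ ∑ k, w k ^ 2 = N ∧ (∃ i, w i = 1) ∧
      (∀ k, e k = (w k : ℝ) / N) ∧ 0 < ∑ k, auxC d k * w k ∧
      ∑ k, auxC d k * w k < ((d : ℤ) + 1) * N := by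
  rcases he with ⟨i, rfl⟩ | ⟨i, j, hij, rfl⟩ | ⟨i, j, hij, rfl⟩
  · refine ⟨fun k => if k = i then 1 else 0, 1, Or.inl rfl, by simp, ⟨i, by simp⟩, ?_, ?_, ?_⟩
    · intro k; simp [stdVec]
    · simpa using auxC_pos d i
    · simpa using auxC_lt d i
  · have hs : ∑ k, auxC d k * ((if k = i then 1 else 0) + (if k = j then 1 else 0))
        = auxC d i + auxC d j := by
      simp [mul_add, Finset.sum_add_distrib]
    refine ⟨fun k => (if k = i then 1 else 0) + (if k = j then 1 else 0), 2, Or.inr rfl, ?_,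
      ⟨i, by simp [hij.ne]⟩, ?_, ?_, ?_⟩
    · have : ∀ k : Fin d, ((if k = i then 1 else 0) + (if k = j then 1 else 0) : ℤ) ^ 2
          = (if k = i then 1 else 0) + (if k = j then 1 else 0) := by
        intro k
        by_cases h1 : k = i
        · subst h1; simp [hij.ne]
        · by_cases h2 : k = j
          · subst h2; simp [h1]
          · simp [h1, h2]
      simp [this, Finset.sum_add_distrib]
    · intro k; simp [stdVec]
    · rw [hs]; have := auxC_pos d i; have := auxC_pos d j; omega
    · rw [hs]; have := auxC_lt d i; have := auxC_lt d j; omega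
  · have hs : ∑ k, auxC d k * ((if k = i then 1 else 0) - (if k = j then 1 else 0))
        = auxC d i - auxC d j := by
      simp [mul_sub, Finset.sum_sub_distrib]
    refine ⟨fun k => (if k = i then 1 else 0) - (if k = j then 1 else 0), 2, Or.inr rfl, ?_,
      ⟨i, by simp [hij.ne]⟩, ?_, ?_, ?_⟩
    · have : ∀ k : Fin d, ((if k = i then 1 else 0) - (if k = j then 1 else 0) : ℤ) ^ 2
          = (if k = i then 1 else 0) + (if k = j then 1 else 0) := by
        intro k
        by_cases h1 : k = i
        · subst h1; simp [hij.ne]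
        · by_cases h2 : k = j
          · subst h2; simp [h1]
          · simp [h1, h2]
      simp [this, Finset.sum_add_distrib]
    · intro k; simp [stdVec]
    · rw [hs]; have : (i : ℕ) < j := hij
      unfold auxC; omega
    · rw [hs]; have := auxC_lt d i; have := auxC_pos d j; omega

lemma aux_dir2 (d : ℕ) (e : Fin d → ℝ) (he : e ∈ Evec d) :
    ∃ (w : Fin d → ℤ) (κ b : ℤ), 0 < b ∧ b < κ ∧
      (∀ x y, sameLine e x y ↔ ∃ n : ℤ, y = fun k => x k + n * w k) ∧
      (∀ x (n : ℤ), pairing e (fun k => x k + n * w k) = pairing e x + 2 * n) ∧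
      (∀ x (n : ℤ), auxPhi d (fun k => x k + n * w k)
        = auxPhi d x + κ * n * (pairing e x + n) - b * n) := by
  obtain ⟨w, N, hN, hw2, ⟨i, hi⟩, hew, hb0, hb1⟩ := aux_dir d e he
  have hN0 : (N : ℝ) ≠ 0 := by rcases hN with rfl | rfl <;> norm_num
  have hP : ∀ x : ZLat d, N * pairing e x = 2 * ∑ k, w k * x k := by
    intro x
    have h1 : (2 * ∑ k, e k * (x k : ℝ)) = 2 * ((∑ k, w k * x k : ℤ) : ℝ) / N := by
      push_cast
      rw [mul_div_assoc, Finset.sum_div]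
      congr 1
      refine Finset.sum_congr rfl (fun k _ => ?_)
      rw [hew k]; ring
    unfold pairing
    rw [h1]
    rcases hN with rfl | rfl
    · have : (2 * ((∑ k, w k * x k : ℤ) : ℝ) / ((1 : ℤ) : ℝ)) = ((2 * ∑ k, w k * x k : ℤ) : ℝ) := by
        push_cast; ring
      rw [this, Int.floor_intCast]; ring
    · have : (2 * ((∑ k, w k * x k : ℤ) : ℝ) / ((2 : ℤ) : ℝ)) = ((∑ k, w k * x k : ℤ) : ℝ) := by
        push_cast; ring
      rw [this, Int.floor_intCast]
  have hNz : N ≠ 0 := by rcases hN with rfl | rfl <;> norm_num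
  have hP2 : ∀ x (n : ℤ), pairing e (fun k => x k + n * w k) = pairing e x + 2 * n := by
    intro x n
    apply mul_left_cancel₀ hNz
    rw [hP, mul_add, hP]
    have : ∑ k, w k * (x k + n * w k) = ∑ k, w k * x k + n * ∑ k, w k ^ 2 := by
      rw [Finset.mul_sum, ← Finset.sum_add_distrib]
      exact Finset.sum_congr rfl (fun k _ => by ring)
    rw [this, hw2]; ring
  refine ⟨w, ((d : ℤ) + 1) * N, ∑ k, auxC d k * w k, hb0, hb1, ?_, hP2, ?_⟩
  · intro x y
    constructor
    · rintro ⟨c, hc⟩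
      have hc' : ∀ k, (x k : ℝ) - y k = c * (w k / N) := fun k => by
        have := congrFun hc k
        simpa [hew k] using this
      refine ⟨y i - x i, funext fun k => ?_⟩
      have h1 := hc' i
      rw [hi] at h1
      have h2 := hc' k
      have : ((y k : ℤ) : ℝ) = ((x k + (y i - x i) * w k : ℤ) : ℝ) := by
        push_cast at h1 ⊢
        have h3 : c * (w k / N) = (c * (1 / N)) * w k := by ring
        rw [h3, ← h1] at h2
        linarith
      exact_mod_cast this
    · rintro ⟨n, rfl⟩
      refine ⟨-(n * N), funext fun k => ?_⟩
      simp only [Pi.smul_apply, smul_eq_mul, hew k]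
      push_cast
      field_simp
      ring
  · intro x n
    have h1 : auxPhi d (fun k => x k + n * w k) = auxPhi d x
        + (((d : ℤ) + 1) * n * (2 * ∑ k, w k * x k) + ((d : ℤ) + 1) * n ^ 2 * ∑ k, w k ^ 2)
        - (∑ k, auxC d k * w k) * n := by
      unfold auxPhi
      simp only [Finset.mul_sum, Finset.sum_mul, ← Finset.sum_add_distrib,
        ← Finset.sum_sub_distrib]
      exact Finset.sum_congr rfl (fun k _ => by ring)
    rw [h1, hw2, ← hP]; ring

lemma aux_posIdx_pos (m : ℤ) : 1 ≤ posIdx m := by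
  unfold posIdx; split_ifs <;> omega

lemma aux_posIdx_inj (m n : ℤ) (h : posIdx m = posIdx (m + 2 * n)) : n = 0 := by
  unfold posIdx at h; split_ifs at h <;> omega

lemma aux_posIdx_surj (m : ℤ) (k : ℕ) (hk : 1 ≤ k) : ∃ n : ℤ, posIdx (m + 2 * n) = k := by
  rcases Int.even_or_odd' ((k : ℤ) - m) with ⟨n, h | h⟩
  · refine ⟨n, ?_⟩
    have : m + 2 * n = k := by omega
    rw [this]; unfold posIdx; split_ifs <;> omega
  · refine ⟨-m - n, ?_⟩
    have : m + 2 * (-m - n) = 1 - k := by omega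
    rw [this]; unfold posIdx; split_ifs <;> omega

lemma aux_posIdx_mono (s n κ b : ℤ) (hb : 0 < b) (hbκ : b < κ)
    (h : posIdx s < posIdx (s + 2 * n)) : 0 < κ * n * (s + n) - b * n := by
  have h1 : (0 < n ∧ 1 ≤ s + n) ∨ (n < 0 ∧ s + n ≤ 0) := by
    unfold posIdx at h; split_ifs at h <;> omega
  have h2 : κ * n * (s + n) - b * n = n * (κ * (s + n) - b) := by ring
  rw [h2]
  rcases h1 with ⟨h1, h3⟩ | ⟨h1, h3⟩
  · apply mul_pos h1; nlinarith
  · apply mul_pos_of_neg_of_neg h1; nlinarith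

/-- set rearrangement -/
def auxR {d : ℕ} (e : Fin d → ℝ) (A : Set (ZLat d)) : Set (ZLat d) :=
  {x | posIdx (pairing e x) ≤ Set.ncard {y | y ∈ A ∧ sameLine e x y}}

def auxE {d : ℕ} (A : Set (ZLat d)) : ℕ := ∑ᶠ x ∈ A, (auxPhi d x).toNat

open Classical in
lemma auxR_main {d : ℕ} (e : Fin d → ℝ) (he : e ∈ Evec d) (A : Set (ZLat d)) (hA : A.Finite) :
    (auxR e A).Finite ∧ auxE (auxR e A) ≤ auxE A ∧
      (auxE (auxR e A) = auxE A → auxR e A = A) := by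
  obtain ⟨w, κ, b, hb, hbκ, hline, hpair, hphi⟩ := aux_dir2 d e he
  let q : ZLat d → Set (ZLat d) := fun x => {y | sameLine e x y}
  have hrefl : ∀ x : ZLat d, sameLine e x x := fun x => ⟨0, by ext; simp⟩
  have hq : ∀ x y, q x = q y ↔ sameLine e x y := by
    intro x y
    constructor
    · intro h
      have : y ∈ q y := hrefl y
      rw [← h] at this
      exact this
    · rintro ⟨c, hc⟩
      ext z
      constructor
      · rintro ⟨c', hc'⟩
        refine ⟨c' - c, ?_⟩
        rw [sub_smul, ← hc, ← hc']; ext; simp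
      · rintro ⟨c', hc'⟩
        refine ⟨c' + c, ?_⟩
        rw [add_smul, ← hc, ← hc']; ext; simp
  obtain ⟨B, hB, hle, heq⟩ := aux_fiber (fun x => (auxPhi d x).toNat) q
    (fun x => posIdx (pairing e x)) (fun x => aux_posIdx_pos _)
    (by
      intro x y hxy hp
      obtain ⟨n, rfl⟩ := (hline x y).1 ((hq x y).1 hxy)
      simp only [hpair] at hp
      have := aux_posIdx_inj _ _ hp
      subst this
      simp)
    (by
      intro x k hk
      obtain ⟨n, hn⟩ := aux_posIdx_surj (pairing e x) k hk
      refine ⟨fun k => x k + n * w k, ?_, ?_⟩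
      · exact ((hq _ _).2 ((hline _ _).2 ⟨n, rfl⟩)).symm
      · simp only [hpair]; exact hn)
    (by
      intro x y hxy hp
      obtain ⟨n, rfl⟩ := (hline x y).1 ((hq x y).1 hxy)
      simp only [hpair] at hp
      have h1 := aux_posIdx_mono _ _ κ b hb hbκ hp
      have h2 := hphi x n
      have h3 := auxPhi_nonneg d x
      show (auxPhi d x).toNat < (auxPhi d (fun k => x k + n * w k)).toNat
      omega)
    hA.toFinset
  have hBA : auxR e A = (B : Set (ZLat d)) := by
    ext x
    rw [Finset.mem_coe, hB]
    have : {y | y ∈ A ∧ sameLine e x y} =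
        ((hA.toFinset.filter (fun y => q y = q x) : Finset (ZLat d)) : Set (ZLat d)) := by
      ext y
      simp only [Set.mem_ofPred_eq, Finset.coe_filter, Set.Finite.mem_toFinset]
      rw [eq_comm, hq]
    unfold auxR
    rw [Set.mem_ofPred_eq, this, Set.ncard_coe_finset]
    constructor <;> intro h <;> convert h
  have hEA : auxE A = ∑ x ∈ hA.toFinset, (auxPhi d x).toNat := by
    unfold auxE; rw [finsum_mem_eq_finite_toFinset_sum _ hA]
  have hEB : auxE (auxR e A) = ∑ x ∈ B, (auxPhi d x).toNat := by
    unfold auxE; rw [hBA, finsum_mem_coe_finset]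
  refine ⟨?_, ?_, ?_⟩
  · rw [hBA]; exact B.finite_toSet
  · rw [hEA, hEB]; exact hle
  · rw [hEA, hEB]; intro h
    rw [hBA, ← heq h]; simp

lemma stepR_level {d : ℕ} (e : Fin d → ℝ) (v : ZLat d → NNReal)
    (hv : (Function.support v).Finite) (t : NNReal) :
    {x | t < stepR e v x} = auxR e {x | t < v x} := by
  ext x
  unfold stepR auxR
  simp only [Set.mem_ofPred_eq]
  rw [aux_nthLargest _ ?_ _ (aux_posIdx_pos _)]
  · have : {y | t < v y ∧ sameLine e x y} =
        Subtype.val '' {y : {y : ZLat d // sameLine e x y} | t < v y.1} := by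
      ext y; simp
    rw [this, Set.ncard_image_of_injective _ Subtype.val_injective]
  · exact hv.preimage (f := fun y : {y : ZLat d // sameLine e x y} => y.1)
      Subtype.val_injective.injOn

def auxIter (d : ℕ) (A : Set (ZLat d)) : ℕ → Set (ZLat d)
  | 0 => A
  | k + 1 => auxR ((EvecList d).getD (k % (EvecList d).length) 0) (auxIter d A k)

lemma mem_EvecList (d : ℕ) (e : Fin d → ℝ) : e ∈ EvecList d ↔ e ∈ Evec d := by
  simp only [EvecList, Evec, List.mem_append, List.mem_map, List.mem_flatMap, List.mem_filterMap,
    List.mem_finRange, true_and, Set.mem_ofPred_eq, or_assoc]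
  refine or_congr ⟨?_, ?_⟩ (or_congr ⟨?_, ?_⟩ ⟨?_, ?_⟩)
  · rintro ⟨i, rfl⟩; exact ⟨i, rfl⟩
  · rintro ⟨i, rfl⟩; exact ⟨i, rfl⟩
  · rintro ⟨i, j, h⟩
    split_ifs at h with hij
    exact ⟨i, j, hij, (Option.some.inj h).symm⟩
  · rintro ⟨i, j, hij, rfl⟩
    exact ⟨i, j, by rw [if_pos hij]⟩
  · rintro ⟨i, j, h⟩
    split_ifs at h with hij
    exact ⟨i, j, hij, (Option.some.inj h).symm⟩
  · rintro ⟨i, j, hij, rfl⟩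
    exact ⟨i, j, by rw [if_pos hij]⟩

lemma EvecList_length_pos (d : ℕ) (hd : 2 ≤ d) : 0 < (EvecList d).length := by
  apply List.length_pos_of_mem (a := stdVec d ⟨0, by omega⟩)
  rw [mem_EvecList]
  exact Or.inl ⟨_, rfl⟩

lemma getD_mem_Evec (d : ℕ) (hd : 2 ≤ d) (k : ℕ) :
    (EvecList d).getD (k % (EvecList d).length) 0 ∈ Evec d := by
  have h := Nat.mod_lt k (EvecList_length_pos d hd)
  rw [← mem_EvecList, List.getD_eq_getElem _ _ h]
  exact List.getElem_mem h

lemma auxIter_finite (d : ℕ) (hd : 2 ≤ d) (A : Set (ZLat d)) (hA : A.Finite) (k : ℕ) :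
    (auxIter d A k).Finite := by
  induction k with
  | zero => exact hA
  | succ k ih => exact (auxR_main _ (getD_mem_Evec d hd k) _ ih).1

lemma auxIter_stab (d : ℕ) (hd : 2 ≤ d) (A : Set (ZLat d)) (hA : A.Finite) :
    ∃ K, ∀ k, K ≤ k → auxIter d A (k + 1) = auxIter d A k := by
  have hanti : Antitone (fun k => auxE (auxIter d A k)) := antitone_nat_of_succ_le (fun k =>
    (auxR_main _ (getD_mem_Evec d hd k) _ (auxIter_finite d hd A hA k)).2.1)
  obtain ⟨K, hK⟩ := WellFoundedLT.antitone_chain_condition (α := ℕ)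
    hanti
  refine ⟨K, fun k hk => ?_⟩
  refine (auxR_main _ (getD_mem_Evec d hd k) _ (auxIter_finite d hd A hA k)).2.2 ?_
  have h1 := hK k hk
  have h2 := hK (k + 1) (by omega)
  exact h2.symm.trans h1

lemma iterR_support (d : ℕ) (hd : 2 ≤ d) (u : ZLat d → NNReal)
    (hfin : (Function.support u).Finite) (k : ℕ) : (Function.support (iterR d u k)).Finite := by
  induction k with
  | zero => exact hfin
  | succ k ih =>
    have hs : ∀ v : ZLat d → NNReal, Function.support v = {x | 0 < v x} := by
      intro v; ext x; simp [pos_iff_ne_zero]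
    rw [hs]
    show Set.Finite {x | 0 < stepR _ (iterR d u k) x}
    rw [stepR_level _ _ ih]
    refine (auxR_main _ (getD_mem_Evec d hd k) _ ?_).1
    rw [← hs]; exact ih

lemma iterR_level (d : ℕ) (hd : 2 ≤ d) (u : ZLat d → NNReal)
    (hfin : (Function.support u).Finite) (t : NNReal) (k : ℕ) :
    {x | t < iterR d u k x} = auxIter d {x | t < u x} k := by
  induction k with
  | zero => rfl
  | succ k ih =>
    show {x | t < stepR _ (iterR d u k) x} = _
    rw [stepR_level _ _ (iterR_support d hd u hfin k), ih]; rfl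

/-- For finitely supported `u` on ℤ^d (d ≥ 2) the iterated one-step rearrangements
stabilize: there is K with R_e(R^K u) = R^K u for every e ∈ E⃗, and R^k u = R^K u
for all k ≥ K. -/
theorem stmt2 (d : ℕ) (hd : 2 ≤ d) (u : ZLat d → NNReal)
    (hfin : (Function.support u).Finite) :
    ∃ K : ℕ, (∀ e ∈ Evec d, stepR e (iterR d u K) = iterR d u K) ∧
      ∀ k : ℕ, K ≤ k → iterR d u k = iterR d u K := by
  have hst : ∀ A : Set (ZLat d), ∃ K, A.Finite →
      ∀ k, K ≤ k → auxIter d A (k + 1) = auxIter d A k := by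
    intro A
    by_cases hA : A.Finite
    · obtain ⟨K, hK⟩ := auxIter_stab d hd A hA
      exact ⟨K, fun _ => hK⟩
    · exact ⟨0, fun h => absurd h hA⟩
  choose κ hκ using hst
  obtain ⟨K, hK⟩ := (hfin.finite_subsets.image κ).bddAbove
  have hstep : ∀ k, K ≤ k → iterR d u (k + 1) = iterR d u k := by
    intro k hk
    have hl : ∀ t : NNReal, {x | t < iterR d u (k + 1) x} = {x | t < iterR d u k x} := by
      intro t
      have hsub : {x | t < u x} ⊆ Function.support u := fun x hx =>
        (lt_of_le_of_lt zero_le hx).ne'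
      rw [iterR_level d hd u hfin, iterR_level d hd u hfin]
      exact hκ _ (hfin.subset hsub) k ((hK ⟨_, hsub, rfl⟩).trans hk)
    ext x : 1
    exact eq_of_forall_lt_iff fun t => Set.ext_iff.1 (hl t) x
  have hconst : ∀ k, K ≤ k → iterR d u k = iterR d u K := by
    intro k hk
    induction k, hk using Nat.le_induction with
    | base => rfl
    | succ k hk ih => rw [hstep k hk, ih]
  refine ⟨K, fun e he => ?_, hconst⟩
  rw [← mem_EvecList] at he
  obtain ⟨i, hi, rfl⟩ := List.getElem_of_mem he
  have hk : K ≤ i + (EvecList d).length * K := by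
    have := EvecList_length_pos d hd
    nlinarith
  have h1 := hstep _ hk
  have h2 : iterR d u (i + (EvecList d).length * K + 1) =
      stepR ((EvecList d).getD ((i + (EvecList d).length * K) % (EvecList d).length) 0)
        (iterR d u (i + (EvecList d).length * K)) := rfl
  rw [h2, Nat.add_mul_mod_self_left, Nat.mod_eq_of_lt hi, List.getD_eq_getElem _ _ hi,
    hconst _ hk] at h1
  exact h1

end
end

section
/- There exists N₀ ∈ ℕ such that for every finitely supported u : ℤ² → [0,∞) with |supp u| = N ≥ N₀, the Schwarz rearrangement u* = R_{ℤ²} u satisfies V◇_{L₁} ⊆ supp u* ⊆ V□_{L₂}, where L₁ = ⌊(√N − 5)/2⌋ and L₂ = ⌈√(N/2)⌉ + 2. -/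
open Filter Topology

noncomputable section

def VdiaI (d : ℕ) (l : ℤ) : Set (ZLat d) := {y | (∑ i, (y i).natAbs : ℤ) ≤ l}

def VboxI (d : ℕ) (l : ℤ) : Set (ZLat d) := {y | ∀ i, |y i| ≤ l}

/-! ### Auxiliary material for the proof -/

/-- The weight decreased by every rearrangement step. -/
def wt (x : ZLat 2) : ℕ := (4 * (x 0 ^ 2 + x 1 ^ 2) - (2 * x 0 + x 1)).toNat

/-- position along the line -/
def qpos (e : Fin 2 → ℝ) (x : ZLat 2) : ℕ := posIdx (pairing e x)

/-- Coordinates adapted to a direction. -/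
structure DirData (e : Fin 2 → ℝ) where
  lab : ZLat 2 → ℤ
  pt : ℤ → ℕ → ZLat 2
  line_iff : ∀ x y, sameLine e x y ↔ lab x = lab y
  lab_pt : ∀ l n, 1 ≤ n → lab (pt l n) = l
  q_pt : ∀ l n, 1 ≤ n → qpos e (pt l n) = n
  pt_lab : ∀ x, pt (lab x) (qpos e x) = x
  wt_lt : ∀ x y, lab x = lab y → qpos e x < qpos e y → wt x < wt y

theorem qpos_pos (e : Fin 2 → ℝ) (x : ZLat 2) : 1 ≤ qpos e x := by
  unfold qpos posIdx
  split_ifs <;> omega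

def ePlus : Fin 2 → ℝ := fun k => (stdVec 2 0 k + stdVec 2 1 k) / 2
def eMinus : Fin 2 → ℝ := fun k => (stdVec 2 0 k - stdVec 2 1 k) / 2

theorem EvecList_two : EvecList 2 = [stdVec 2 0, stdVec 2 1, ePlus, eMinus] := by
  simp [EvecList, List.finRange_succ]
  exact ⟨rfl, rfl⟩

theorem pair_0 (x : ZLat 2) : pairing (stdVec 2 0) x = 2 * x 0 := by
  unfold pairing
  rw [Int.floor_eq_iff]
  simp [stdVec]

theorem pair_1 (x : ZLat 2) : pairing (stdVec 2 1) x = 2 * x 1 := by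
  unfold pairing
  rw [Int.floor_eq_iff]
  simp [stdVec]

theorem pair_p (x : ZLat 2) : pairing ePlus x = x 0 + x 1 := by
  unfold pairing
  rw [Int.floor_eq_iff]
  simp only [ePlus, stdVec, Fin.sum_univ_two]
  push_cast
  constructor <;> norm_num <;> linarith

theorem pair_m (x : ZLat 2) : pairing eMinus x = x 0 - x 1 := by
  unfold pairing
  rw [Int.floor_eq_iff]
  simp only [eMinus, stdVec, Fin.sum_univ_two]
  push_cast
  constructor <;> norm_num <;> linarith

theorem line_0 (x y : ZLat 2) : sameLine (stdVec 2 0) x y ↔ x 1 = y 1 := by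
  unfold sameLine
  constructor
  · rintro ⟨c, hc⟩
    have h := congrFun hc 1
    simp [stdVec] at h
    exact_mod_cast sub_eq_zero.1 h
  · intro h
    refine ⟨(x 0 : ℝ) - y 0, ?_⟩
    funext i
    fin_cases i <;> simp [stdVec, h]

theorem line_1 (x y : ZLat 2) : sameLine (stdVec 2 1) x y ↔ x 0 = y 0 := by
  unfold sameLine
  constructor
  · rintro ⟨c, hc⟩
    have h := congrFun hc 0
    simp [stdVec] at h
    exact_mod_cast sub_eq_zero.1 h
  · intro h
    refine ⟨(x 1 : ℝ) - y 1, ?_⟩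
    funext i
    fin_cases i <;> simp [stdVec, h]

theorem line_p (x y : ZLat 2) : sameLine ePlus x y ↔ x 0 - x 1 = y 0 - y 1 := by
  unfold sameLine
  constructor
  · rintro ⟨c, hc⟩
    have h := congrFun hc 0
    have h' := congrFun hc 1
    simp [ePlus, stdVec] at h h'
    have : (x 0 : ℝ) - x 1 = y 0 - y 1 := by linarith
    exact_mod_cast this
  · intro h
    have h : (x 0 : ℝ) - x 1 = y 0 - y 1 := by exact_mod_cast h
    refine ⟨2 * ((x 0 : ℝ) - y 0), ?_⟩
    funext i
    fin_cases i <;> simp [ePlus, stdVec] <;> linarith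

theorem line_m (x y : ZLat 2) : sameLine eMinus x y ↔ x 0 + x 1 = y 0 + y 1 := by
  unfold sameLine
  constructor
  · rintro ⟨c, hc⟩
    have h := congrFun hc 0
    have h' := congrFun hc 1
    simp [eMinus, stdVec] at h h'
    have : (x 0 : ℝ) + x 1 = y 0 + y 1 := by linarith
    exact_mod_cast this
  · intro h
    have h : (x 0 : ℝ) + x 1 = y 0 + y 1 := by exact_mod_cast h
    refine ⟨2 * ((x 0 : ℝ) - y 0), ?_⟩
    funext i
    fin_cases i <;> simp [eMinus, stdVec] <;> linarith

theorem wt_cast (x : ZLat 2) : (wt x : ℤ) = 4 * (x 0 ^ 2 + x 1 ^ 2) - (2 * x 0 + x 1) := by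
  unfold wt
  apply Int.toNat_of_nonneg
  have h0 : x 0 ≤ x 0 ^ 2 := by
    have := Int.le_self_sq (x 0); simpa using this
  have h1 : x 1 ≤ x 1 ^ 2 := by
    have := Int.le_self_sq (x 1); simpa using this
  nlinarith [sq_nonneg (x 0), sq_nonneg (x 1)]

/-- inverse of `posIdx` on integers with the parity of `l` -/
def invPos (l : ℤ) (n : ℕ) : ℤ := if ((n : ℤ) - l) % 2 = 0 then n else 1 - n

theorem posIdx_invPos (l : ℤ) (n : ℕ) (hn : 1 ≤ n) : posIdx (invPos l n) = n := by
  unfold posIdx invPos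
  split_ifs <;> omega

theorem invPos_par (l : ℤ) (n : ℕ) : (invPos l n - l) % 2 = 0 := by
  unfold invPos
  split_ifs <;> omega

theorem invPos_posIdx (l m : ℤ) (h : (m - l) % 2 = 0) : invPos l (posIdx m) = m := by
  unfold posIdx invPos
  split_ifs <;> omega

/-- spiral comparison: later points with the same parity are at least as far out. -/
theorem posIdx_lt {m m' : ℤ} (hp : (m - m') % 2 = 0) (h : posIdx m < posIdx m') :
    (m' = -m ∧ 0 < m) ∨ |m| + 2 ≤ |m'| := by
  unfold posIdx at h
  rcases abs_cases m with ⟨h1, _⟩ | ⟨h1, _⟩ <;> rcases abs_cases m' with ⟨h2, _⟩ | ⟨h2, _⟩ <;>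
    rw [h1, h2] <;> split_ifs at h <;> omega

theorem quad_lt {m m' : ℤ} (h : (m' = -m ∧ 0 < m) ∨ |m| + 2 ≤ |m'|) (c : ℤ) (hc : 0 < c)
    (hc2 : c ≤ 6) : 4 * m ^ 2 - c * m < 4 * m' ^ 2 - c * m' := by
  rcases h with ⟨rfl, h⟩ | h
  · nlinarith [mul_pos hc h]
  · have h1 : -m ≤ |m| := neg_le_abs m
    have h2 : m' ≤ |m'| := le_abs_self m'
    have h3 := abs_nonneg m
    rw [← sq_abs m, ← sq_abs m']
    nlinarith

theorem dir_0 : Nonempty (DirData (stdVec 2 0)) := by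
  refine ⟨⟨fun x => x 1, fun l n => ![invPos 0 n / 2, l], line_0, ?_, ?_, ?_, ?_⟩⟩
  · intro l n _; simp
  · intro l n hn
    have h := invPos_par 0 n
    unfold qpos
    rw [pair_0]
    have : 2 * (![invPos 0 n / 2, l] : ZLat 2) 0 = invPos 0 n := by simp; omega
    rw [this, posIdx_invPos 0 n hn]
  · intro x
    unfold qpos
    rw [pair_0, invPos_posIdx _ _ (by omega)]
    funext i
    fin_cases i <;> simp
  · intro x y h hq
    unfold qpos at hq
    rw [pair_0, pair_0] at hq
    have := quad_lt (posIdx_lt (by omega) hq) 4 (by norm_num) (by norm_num)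
    zify
    rw [wt_cast, wt_cast]
    rw [h]
    nlinarith

theorem dir_1 : Nonempty (DirData (stdVec 2 1)) := by
  refine ⟨⟨fun x => x 0, fun l n => ![l, invPos 0 n / 2], line_1, ?_, ?_, ?_, ?_⟩⟩
  · intro l n _; simp
  · intro l n hn
    have h := invPos_par 0 n
    unfold qpos
    rw [pair_1]
    have : 2 * (![l, invPos 0 n / 2] : ZLat 2) 1 = invPos 0 n := by simp; omega
    rw [this, posIdx_invPos 0 n hn]
  · intro x
    unfold qpos
    rw [pair_1, invPos_posIdx _ _ (by omega)]
    funext i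
    fin_cases i <;> simp
  · intro x y h hq
    unfold qpos at hq
    rw [pair_1, pair_1] at hq
    have := quad_lt (posIdx_lt (by omega) hq) 2 (by norm_num) (by norm_num)
    zify
    rw [wt_cast, wt_cast]
    rw [h]
    nlinarith

theorem dir_p : Nonempty (DirData ePlus) := by
  refine ⟨⟨fun x => x 0 - x 1, fun l n => ![(invPos l n + l) / 2, (invPos l n - l) / 2],
    line_p, ?_, ?_, ?_, ?_⟩⟩
  · intro l n _
    have h := invPos_par l n
    simp; omega
  · intro l n hn
    have h := invPos_par l n
    unfold qpos
    rw [pair_p]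
    have : (![(invPos l n + l) / 2, (invPos l n - l) / 2] : ZLat 2) 0 +
      (![(invPos l n + l) / 2, (invPos l n - l) / 2] : ZLat 2) 1 = invPos l n := by simp; omega
    rw [this, posIdx_invPos l n hn]
  · intro x
    unfold qpos
    rw [pair_p]
    rw [invPos_posIdx _ _ (by omega)]
    funext i
    fin_cases i <;> simp <;> omega
  · intro x y h hq
    unfold qpos at hq
    rw [pair_p, pair_p] at hq
    have := quad_lt (posIdx_lt (by omega) hq) 3 (by norm_num) (by norm_num)
    zify
    rw [wt_cast, wt_cast]
    have h2 : (x 0 - x 1) ^ 2 = (y 0 - y 1) ^ 2 := by rw [h]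
    nlinarith

theorem dir_m : Nonempty (DirData eMinus) := by
  refine ⟨⟨fun x => x 0 + x 1, fun l n => ![(l + invPos l n) / 2, (l - invPos l n) / 2],
    line_m, ?_, ?_, ?_, ?_⟩⟩
  · intro l n _
    have h := invPos_par l n
    simp; omega
  · intro l n hn
    have h := invPos_par l n
    unfold qpos
    rw [pair_m]
    have : (![(l + invPos l n) / 2, (l - invPos l n) / 2] : ZLat 2) 0 -
      (![(l + invPos l n) / 2, (l - invPos l n) / 2] : ZLat 2) 1 = invPos l n := by simp; omega
    rw [this, posIdx_invPos l n hn]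
  · intro x
    unfold qpos
    rw [pair_m]
    rw [invPos_posIdx _ _ (by omega)]
    funext i
    fin_cases i <;> simp <;> omega
  · intro x y h hq
    unfold qpos at hq
    rw [pair_m, pair_m] at hq
    have := quad_lt (posIdx_lt (by omega) hq) 1 (by norm_num) (by norm_num)
    zify
    rw [wt_cast, wt_cast]
    have h2 : (x 0 + x 1) ^ 2 = (y 0 + y 1) ^ 2 := by rw [h]
    nlinarith

/-- direction used at step `k` -/
def dirE (k : ℕ) : Fin 2 → ℝ := (EvecList 2).getD (k % (EvecList 2).length) 0

theorem dirE_eq (k : ℕ) : dirE k = [stdVec 2 0, stdVec 2 1, ePlus, eMinus].getD (k % 4) 0 := by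
  unfold dirE
  rw [EvecList_two]
  rfl

theorem dirE_nonempty (k : ℕ) : Nonempty (DirData (dirE k)) := by
  rw [dirE_eq]
  have : k % 4 = 0 ∨ k % 4 = 1 ∨ k % 4 = 2 ∨ k % 4 = 3 := by omega
  rcases this with h | h | h | h <;> rw [h]
  · exact dir_0
  · exact dir_1
  · exact dir_p
  · exact dir_m

def dd (k : ℕ) : DirData (dirE k) := (dirE_nonempty k).some

/-- number of points of `A` on the line `l` -/
def cnt {e : Fin 2 → ℝ} (D : DirData e) (A : Finset (ZLat 2)) (l : ℤ) : ℕ :=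
  (A.filter (fun y => D.lab y = l)).card

/-- set rearrangement -/
def TT {e : Fin 2 → ℝ} (D : DirData e) (A : Finset (ZLat 2)) : Finset (ZLat 2) :=
  (A.image D.lab).biUnion (fun l => (Finset.Icc 1 (cnt D A l)).image (D.pt l))

theorem mem_TT {e : Fin 2 → ℝ} (D : DirData e) (A : Finset (ZLat 2)) (x : ZLat 2) :
    x ∈ TT D A ↔ qpos e x ≤ cnt D A (D.lab x) := by
  unfold TT
  simp only [Finset.mem_biUnion, Finset.mem_image, Finset.mem_Icc]
  constructor
  · rintro ⟨l, _, n, ⟨h1, h2⟩, rfl⟩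
    rw [D.q_pt l n h1, D.lab_pt l n h1]
    exact h2
  · intro h
    have hq := qpos_pos e x
    have hpos : 0 < cnt D A (D.lab x) := by omega
    obtain ⟨y, hy⟩ := Finset.card_pos.1 hpos
    rw [Finset.mem_filter] at hy
    exact ⟨D.lab x, ⟨y, hy.1, hy.2⟩, qpos e x, ⟨hq, h⟩, D.pt_lab x⟩

theorem cnt_TT {e : Fin 2 → ℝ} (D : DirData e) (A : Finset (ZLat 2)) (l : ℤ) :
    cnt D (TT D A) l = cnt D A l := by
  have : (TT D A).filter (fun y => D.lab y = l) = (Finset.Icc 1 (cnt D A l)).image (D.pt l) := by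
    ext x
    rw [Finset.mem_filter, mem_TT, Finset.mem_image]
    constructor
    · rintro ⟨h, rfl⟩
      exact ⟨qpos e x, Finset.mem_Icc.2 ⟨qpos_pos e x, h⟩, D.pt_lab x⟩
    · rintro ⟨n, hn, rfl⟩
      rw [Finset.mem_Icc] at hn
      rw [D.q_pt l n hn.1, D.lab_pt l n hn.1]
      exact ⟨hn.2, rfl⟩
  unfold cnt at this ⊢
  rw [this, Finset.card_image_of_injOn, Nat.card_Icc]
  · omega
  · intro a ha b hb hab
    simp only [Finset.coe_Icc, Set.mem_Icc] at ha hb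
    rw [← D.q_pt l a ha.1, ← D.q_pt l b hb.1, hab]

/-- exchange on one line -/
theorem exch {α : Type*} [DecidableEq α] (w : α → ℕ) (A B : Finset α) (hc : A.card = B.card)
    (h : ∀ x ∈ A \ B, ∀ y ∈ B \ A, w y < w x) :
    (∑ x ∈ B, w x ≤ ∑ x ∈ A, w x) ∧ (A ≠ B → ∑ x ∈ B, w x < ∑ x ∈ A, w x) := by
  have key : A ≠ B → ∑ x ∈ B, w x < ∑ x ∈ A, w x := by
    intro hne
    have hcard : (A \ B).card = (B \ A).card := Finset.card_sdiff_comm hc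
    have hnon : (A \ B).Nonempty := by
      rw [Finset.sdiff_nonempty]
      intro hs
      exact hne (Finset.eq_of_subset_of_card_le hs hc.ge)
    have f := Finset.equivOfCardEq hcard
    have h1 : ∑ x ∈ B \ A, w x < ∑ x ∈ A \ B, w x := by
      rw [← Finset.sum_coe_sort (B \ A), ← Finset.sum_coe_sort (A \ B), ← Equiv.sum_comp f]
      apply Finset.sum_lt_sum_of_nonempty
      · obtain ⟨a, ha⟩ := hnon
        exact ⟨⟨a, ha⟩, Finset.mem_univ _⟩
      · intro i _
        exact h i.1 i.2 (f i).1 (f i).2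
    have hA := Finset.sum_inter_add_sum_sdiff A B w
    have hB := Finset.sum_inter_add_sum_sdiff B A w
    rw [Finset.inter_comm] at hB
    omega
  refine ⟨?_, key⟩
  by_cases hAB : A = B
  · rw [hAB]
  · exact (key hAB).le

theorem card_TT {e : Fin 2 → ℝ} (D : DirData e) (A : Finset (ZLat 2)) :
    (TT D A).card = A.card := by
  classical
  have hA : ∀ x ∈ A, D.lab x ∈ (A ∪ TT D A).image D.lab := fun x hx =>
    Finset.mem_image_of_mem _ (Finset.mem_union_left _ hx)
  have hB : ∀ x ∈ TT D A, D.lab x ∈ (A ∪ TT D A).image D.lab := fun x hx =>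
    Finset.mem_image_of_mem _ (Finset.mem_union_right _ hx)
  rw [Finset.card_eq_sum_card_fiberwise hA, Finset.card_eq_sum_card_fiberwise hB]
  exact Finset.sum_congr rfl fun l _ => cnt_TT D A l

theorem sum_TT {e : Fin 2 → ℝ} (D : DirData e) (A : Finset (ZLat 2)) :
    (∑ x ∈ TT D A, wt x ≤ ∑ x ∈ A, wt x) ∧
    (A ≠ TT D A → ∑ x ∈ TT D A, wt x < ∑ x ∈ A, wt x) := by
  classical
  have hA : ∀ x ∈ A, D.lab x ∈ (A ∪ TT D A).image D.lab := fun x hx =>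
    Finset.mem_image_of_mem _ (Finset.mem_union_left _ hx)
  have hB : ∀ x ∈ TT D A, D.lab x ∈ (A ∪ TT D A).image D.lab := fun x hx =>
    Finset.mem_image_of_mem _ (Finset.mem_union_right _ hx)
  have hl : ∀ l, _ := fun l => exch wt (A.filter (fun y => D.lab y = l))
    ((TT D A).filter (fun y => D.lab y = l)) (cnt_TT D A l).symm (by
      intro x hx y hy
      simp only [Finset.mem_sdiff, Finset.mem_filter, mem_TT] at hx hy
      obtain ⟨⟨hxA, hxl⟩, hx2⟩ := hx
      obtain ⟨⟨hyq, hyl⟩, hy2⟩ := hy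
      apply D.wt_lt y x (by rw [hxl, hyl])
      rw [hyl] at hyq
      rw [hxl] at hx2
      by_contra hcon
      exact hx2 ⟨by omega, rfl⟩)
  rw [← Finset.sum_fiberwise_of_maps_to hA, ← Finset.sum_fiberwise_of_maps_to hB]
  refine ⟨Finset.sum_le_sum fun l _ => (hl l).1, ?_⟩
  intro hne
  apply Finset.sum_lt_sum fun l _ => (hl l).1
  by_contra hcon
  push Not at hcon
  apply hne
  have hfil : ∀ l ∈ (A ∪ TT D A).image D.lab, A.filter (fun y => D.lab y = l) =
      (TT D A).filter (fun y => D.lab y = l) := by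
    intro l hlm
    by_contra h2
    exact absurd ((hl l).2 h2) (not_lt.2 (hcon l hlm))
  ext x
  constructor
  · intro hx
    have : x ∈ A.filter (fun y => D.lab y = D.lab x) := Finset.mem_filter.2 ⟨hx, rfl⟩
    rw [hfil _ (hA x hx)] at this
    exact (Finset.mem_filter.1 this).1
  · intro hx
    have : x ∈ (TT D A).filter (fun y => D.lab y = D.lab x) := Finset.mem_filter.2 ⟨hx, rfl⟩
    rw [← hfil _ (hB x hx)] at this
    exact (Finset.mem_filter.1 this).1

/-- iterated set rearrangement -/
def iterT (A : Finset (ZLat 2)) : ℕ → Finset (ZLat 2)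
  | 0 => A
  | k + 1 => TT (dd k) (iterT A k)

theorem card_iterT (A : Finset (ZLat 2)) (k : ℕ) : (iterT A k).card = A.card := by
  induction k with
  | zero => rfl
  | succ k ih => rw [iterT, card_TT, ih]

theorem iterT_stable (A : Finset (ZLat 2)) : ∃ K, ∀ k, K ≤ k → iterT A k = iterT A K := by
  have hanti : Antitone fun k => ∑ x ∈ iterT A k, wt x :=
    antitone_nat_of_succ_le fun k => (sum_TT (dd k) (iterT A k)).1
  let f : ℕ → ℕ := fun k => ∑ x ∈ iterT A k, wt x
  obtain ⟨K, hK⟩ : ∃ K, ∀ k, f K ≤ f k := ⟨Function.argmin f, fun k => Function.argmin_le f k⟩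
  refine ⟨K, fun k hk => ?_⟩
  induction k, hk using Nat.le_induction with
  | base => rfl
  | succ k hk ih =>
    rw [← ih]
    by_contra hne
    have h1 := (sum_TT (dd k) (iterT A k)).2 (fun h => hne h.symm)
    have h2 : f k ≤ f K := hanti hk
    have h3 : f K ≤ f (k + 1) := hK (k + 1)
    have h4 : f (k + 1) < f k := h1
    omega

/-! ### level sets -/

theorem lt_nthLargest {α : Type*} (v : α → NNReal) (n : ℕ) (hn : 1 ≤ n) (M : NNReal)
    (hM : ∀ x, v x ≤ M) (t : NNReal) :
    t < nthLargest v n ↔ ∃ Ω : Finset α, Ω.card = n ∧ ∀ x ∈ Ω, t < v x := by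
  unfold nthLargest
  constructor
  · intro h
    by_cases hne : {t | ∃ Ω : Finset α, Ω.card = n ∧ ∀ x ∈ Ω, t ≤ v x}.Nonempty
    · obtain ⟨s, ⟨Ω, h1, h2⟩, hs⟩ := exists_lt_of_lt_csSup hne h
      exact ⟨Ω, h1, fun x hx => hs.trans_le (h2 x hx)⟩
    · rw [Set.not_nonempty_iff_eq_empty.1 hne, csSup_empty] at h
      exact absurd h not_lt_bot
  · rintro ⟨Ω, h1, h2⟩
    have hΩ : Ω.Nonempty := Finset.card_pos.1 (by omega)
    obtain ⟨x, hx, hmin⟩ := Finset.exists_min_image Ω v hΩ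
    refine (h2 x hx).trans_le (le_csSup ⟨M, ?_⟩ ⟨Ω, h1, hmin⟩)
    rintro s ⟨Ω', h3, h4⟩
    obtain ⟨y, hy⟩ : Ω'.Nonempty := Finset.card_pos.1 (by omega)
    exact (h4 y hy).trans (hM y)

theorem lt_stepR {e : Fin 2 → ℝ} (D : DirData e) (u : ZLat 2 → NNReal) (M : NNReal)
    (hM : ∀ x, u x ≤ M) (t : NNReal) (A : Finset (ZLat 2)) (hA : ∀ x, x ∈ A ↔ t < u x)
    (x : ZLat 2) : x ∈ TT D A ↔ t < stepR e u x := by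
  classical
  unfold stepR
  change _ ↔ t < nthLargest _ (qpos e x)
  rw [lt_nthLargest (fun y : {y : ZLat 2 // sameLine e x y} => u y.1) _ (qpos_pos e x) M
    (fun y => hM y.1), mem_TT]
  unfold cnt
  constructor
  · intro h
    obtain ⟨S, hS, hc⟩ := Finset.exists_subset_card_eq h
    refine ⟨S.subtype (fun y => sameLine e x y), ?_, ?_⟩
    · rw [Finset.card_subtype, Finset.filter_true_of_mem]
      · exact hc
      · intro y hy
        rw [D.line_iff]
        exact (Finset.mem_filter.1 (hS hy)).2.symm
    · intro y hy
      rw [Finset.mem_subtype] at hy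
      exact (hA _).1 (Finset.mem_filter.1 (hS hy)).1
  · rintro ⟨Ω, h1, h2⟩
    rw [← h1, ← Finset.card_map (Function.Embedding.subtype _)]
    apply Finset.card_le_card
    intro y hy
    rw [Finset.mem_map] at hy
    obtain ⟨z, hz, rfl⟩ := hy
    rw [Finset.mem_filter]
    exact ⟨(hA _).2 (h2 z hz), ((D.line_iff _ _).1 z.2).symm⟩

theorem lt_iterR (u : ZLat 2 → NNReal) (M : NNReal) (hM : ∀ x, u x ≤ M) (k : ℕ) :
    (∀ x, iterR 2 u k x ≤ M) ∧ ∀ (t : NNReal) (A : Finset (ZLat 2)),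
      (∀ x, x ∈ A ↔ t < u x) → ∀ x, x ∈ iterT A k ↔ t < iterR 2 u k x := by
  induction k with
  | zero => exact ⟨hM, fun t A hA => hA⟩
  | succ k ih =>
    have h2 : ∀ (t : NNReal) (A : Finset (ZLat 2)),
      (∀ x, x ∈ A ↔ t < u x) → ∀ x, x ∈ iterT A (k + 1) ↔ t < iterR 2 u (k + 1) x :=
      fun t A hA x => lt_stepR (dd k) (iterR 2 u k) M ih.1 t _ (ih.2 t A hA) x
    refine ⟨?_, h2⟩
    intro x
    by_contra hcon
    push Not at hcon
    have hemp : ∀ x, x ∈ (∅ : Finset (ZLat 2)) ↔ M < u x := fun x => by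
      simpa using hM x
    have := (h2 M ∅ hemp x).2 hcon
    have hc := card_iterT ∅ (k + 1)
    rw [Finset.card_empty, Finset.card_eq_zero] at hc
    rw [hc] at this
    simp at this

/-- The support of the limit. -/
theorem support_RZd (u : ZLat 2 → NNReal) (hu : (Function.support u).Finite) :
    ∃ K, (∀ k, K ≤ k → iterT hu.toFinset k = iterT hu.toFinset K) ∧
      Function.support (RZd 2 u) = ↑(iterT hu.toFinset K) := by
  classical
  choose K hK using iterT_stable
  obtain ⟨M, hM⟩ : ∃ M, ∀ x, u x ≤ M := by
    refine ⟨hu.toFinset.sup u, fun x => ?_⟩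
    by_cases hx : u x = 0
    · rw [hx]; exact zero_le
    · exact Finset.le_sup (f := u) (hu.mem_toFinset.2 hx)
  let K0 := hu.toFinset.powerset.sup K
  have hst : ∀ A ⊆ hu.toFinset, ∀ k, K0 ≤ k → iterT A k = iterT A K0 := by
    intro A hA k hk
    have h0 : K A ≤ K0 := Finset.le_sup (f := K) (Finset.mem_powerset.2 hA)
    rw [hK A k (h0.trans hk), hK A K0 h0]
  refine ⟨K0, hst _ subset_rfl, ?_⟩
  have hconst : ∀ k, K0 ≤ k → iterR 2 u k = iterR 2 u K0 := by
    intro k hk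
    funext x
    apply eq_of_forall_lt_iff
    intro t
    have hA : ∀ x, x ∈ hu.toFinset.filter (fun x => t < u x) ↔ t < u x := by
      intro x
      rw [Finset.mem_filter, hu.mem_toFinset, Function.mem_support]
      exact ⟨fun h => h.2, fun h => ⟨(lt_of_le_of_lt (zero_le) h).ne', h⟩⟩
    rw [← (lt_iterR u M hM k).2 t _ hA x, ← (lt_iterR u M hM K0).2 t _ hA x,
      hst _ (Finset.filter_subset _ _) k hk]
  have hlim : RZd 2 u = iterR 2 u K0 := by
    funext x
    apply Tendsto.limUnder_eq
    apply tendsto_const_nhds.congr'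
    filter_upwards [eventually_ge_atTop K0] with k hk
    rw [hconst k hk]
  ext x
  rw [hlim, Function.mem_support, Finset.mem_coe, (lt_iterR u M hM K0).2 0 _ (fun x => by
    rw [hu.mem_toFinset, Function.mem_support, pos_iff_ne_zero]) x, pos_iff_ne_zero]

/-! ### Sets fixed by all rearrangements -/

def Closed (e : Fin 2 → ℝ) (S : Finset (ZLat 2)) : Prop :=
  ∀ x y, x ∈ S → sameLine e x y → posIdx (pairing e y) ≤ posIdx (pairing e x) → y ∈ S

theorem closed_of_fixed {e : Fin 2 → ℝ} (D : DirData e) (S : Finset (ZLat 2))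
    (h : TT D S = S) : Closed e S := by
  intro x y hx hl hq
  rw [← h, mem_TT] at hx ⊢
  rw [D.line_iff] at hl
  rw [← hl]
  exact le_trans hq hx

theorem closed_all (A : Finset (ZLat 2)) (K : ℕ) (hK : ∀ k, K ≤ k → iterT A k = iterT A K) :
    Closed (stdVec 2 0) (iterT A K) ∧ Closed (stdVec 2 1) (iterT A K) ∧
    Closed ePlus (iterT A K) ∧ Closed eMinus (iterT A K) := by
  have h : ∀ k, K ≤ k → Closed (dirE k) (iterT A K) := by
    intro k hk
    apply closed_of_fixed (dd k)
    have h1 := hK (k + 1) (by omega)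
    rw [iterT, hK k hk] at h1
    exact h1
  have h0 := h (4 * K) (by omega)
  have h1 := h (4 * K + 1) (by omega)
  have h2 := h (4 * K + 2) (by omega)
  have h3 := h (4 * K + 3) (by omega)
  rw [dirE_eq] at h0 h1 h2 h3
  rw [show (4 * K) % 4 = 0 by omega] at h0
  rw [show (4 * K + 1) % 4 = 1 by omega] at h1
  rw [show (4 * K + 2) % 4 = 2 by omega] at h2
  rw [show (4 * K + 3) % 4 = 3 by omega] at h3
  exact ⟨h0, h1, h2, h3⟩

theorem diamond (S : Finset (ZLat 2)) (h0 : Closed (stdVec 2 0) S) (h1 : Closed (stdVec 2 1) S)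
    (hm : Closed eMinus S) (x : ZLat 2) (hx : x ∈ S) (i : Fin 2) (y : ZLat 2)
    (hy : |y 0| + |y 1| + 2 ≤ |x i|) : y ∈ S := by
  obtain ⟨m, hmx⟩ : ∃ m, m = |x i| := ⟨_, rfl⟩
  rw [← hmx] at hy
  have hy0 := abs_nonneg (y 0)
  have hy1 := abs_nonneg (y 1)
  -- the point (m, 0)
  have A0 : ![m, 0] ∈ S := by
    have hi : i = 0 ∨ i = 1 := by fin_cases i <;> simp
    rcases hi with rfl | rfl
    · have a1 : ![x 0, 0] ∈ S := by
        apply h1 x _ hx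
        · rw [line_1]; simp
        · rw [pair_1, pair_1]; simp [posIdx]; split_ifs <;> omega
      apply h0 _ _ a1
      · rw [line_0]; simp
      · rw [pair_0, pair_0]; simp only [Matrix.cons_val_zero]
        unfold posIdx; rcases abs_cases (x 0) with ⟨h, _⟩ | ⟨h, _⟩ <;> split_ifs <;> omega
    · have a1 : ![0, x 1] ∈ S := by
        apply h0 x _ hx
        · rw [line_0]; simp
        · rw [pair_0, pair_0]; simp [posIdx]; split_ifs <;> omega
      have a2 : ![0, m] ∈ S := by
        apply h1 _ _ a1
        · rw [line_1]; simp
        · rw [pair_1, pair_1]; simp only [Matrix.cons_val_one, Matrix.cons_val_zero]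
          unfold posIdx; rcases abs_cases (x 1) with ⟨h, _⟩ | ⟨h, _⟩ <;> split_ifs <;> omega
      apply hm _ _ a2
      · rw [line_m]; simp
      · rw [pair_m, pair_m]; simp only [Matrix.cons_val_one, Matrix.cons_val_zero]
        unfold posIdx; split_ifs <;> omega
  -- the point (m - b, b) with b = |y 1| + 1
  have A1 : ![m - (|y 1| + 1), |y 1| + 1] ∈ S := by
    apply hm _ _ A0
    · rw [line_m]; simp
    · rw [pair_m, pair_m]; simp only [Matrix.cons_val_one, Matrix.cons_val_zero]
      unfold posIdx; split_ifs <;> omega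
  have A2 : ![y 0, |y 1| + 1] ∈ S := by
    apply h0 _ _ A1
    · rw [line_0]; simp
    · rw [pair_0, pair_0]; simp only [Matrix.cons_val_zero]
      unfold posIdx; rcases abs_cases (y 0) with ⟨h, _⟩ | ⟨h, _⟩ <;> split_ifs <;> omega
  apply h1 _ _ A2
  · rw [line_1]; simp
  · rw [pair_1, pair_1]; simp only [Matrix.cons_val_one, Matrix.cons_val_zero]
    unfold posIdx; rcases abs_cases (y 1) with ⟨h, _⟩ | ⟨h, _⟩ <;> split_ifs <;> omega

theorem diamond_card (S : Finset (ZLat 2)) (l : ℕ)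
    (h : ∀ y : ZLat 2, |y 0| + |y 1| ≤ l → y ∈ S) : (l + 1) ^ 2 + l ^ 2 ≤ S.card := by
  classical
  let f : ℕ × ℕ → ZLat 2 := fun p => ![(p.1 : ℤ) - p.2, (p.1 : ℤ) + p.2 - l]
  let g : ℕ × ℕ → ZLat 2 := fun p => ![(p.1 : ℤ) - p.2, (p.1 : ℤ) + p.2 - l + 1]
  let F := (Finset.range (l + 1) ×ˢ Finset.range (l + 1)).image f
  let G := (Finset.range l ×ˢ Finset.range l).image g
  have hF : F.card = (l + 1) ^ 2 := by
    rw [Finset.card_image_of_injective, Finset.card_product, Finset.card_range, sq]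
    rintro ⟨a, b⟩ ⟨c, d⟩ hab
    have e0 := congrFun hab 0
    have e1 := congrFun hab 1
    simp [f] at e0 e1
    rw [Prod.mk.injEq]; omega
  have hG : G.card = l ^ 2 := by
    rw [Finset.card_image_of_injective, Finset.card_product, Finset.card_range, sq]
    rintro ⟨a, b⟩ ⟨c, d⟩ hab
    have e0 := congrFun hab 0
    have e1 := congrFun hab 1
    simp [g] at e0 e1
    rw [Prod.mk.injEq]; omega
  have hd : Disjoint F G := by
    rw [Finset.disjoint_left]
    intro x hx hx'
    obtain ⟨⟨a, b⟩, _, rfl⟩ := Finset.mem_image.1 hx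
    obtain ⟨⟨c, d⟩, _, hab⟩ := Finset.mem_image.1 hx'
    have e0 := congrFun hab 0
    have e1 := congrFun hab 1
    simp [f, g] at e0 e1
    omega
  rw [← hF, ← hG, ← Finset.card_union_of_disjoint hd]
  apply Finset.card_le_card
  intro x hx
  apply h
  rw [Finset.mem_union] at hx
  rcases hx with hx | hx <;> obtain ⟨⟨a, b⟩, hab, rfl⟩ := Finset.mem_image.1 hx <;>
    simp only [Finset.mem_product, Finset.mem_range] at hab <;>
    simp only [f, g, Matrix.cons_val_zero, Matrix.cons_val_one]
  · rcases abs_cases ((a : ℤ) - b) with ⟨h, _⟩ | ⟨h, _⟩ <;>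
      rcases abs_cases ((a : ℤ) + b - l) with ⟨h', _⟩ | ⟨h', _⟩ <;> omega
  · rcases abs_cases ((a : ℤ) - b) with ⟨h, _⟩ | ⟨h, _⟩ <;>
      rcases abs_cases ((a : ℤ) + b - l + 1) with ⟨h', _⟩ | ⟨h', _⟩ <;> omega

theorem box_card (S : Finset (ZLat 2)) (l : ℕ)
    (h : ∀ y ∈ S, ∀ i, |y i| ≤ (l : ℤ)) : S.card ≤ (2 * l + 1) ^ 2 := by
  classical
  have hsub : S ⊆ Fintype.piFinset (fun _ : Fin 2 => Finset.Icc (-(l : ℤ)) l) := by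
    intro y hy
    rw [Fintype.mem_piFinset]
    intro i
    exact Finset.mem_Icc.2 (abs_le.1 (h y hy i))
  refine (Finset.card_le_card hsub).trans (le_of_eq ?_)
  rw [Fintype.card_piFinset]
  simp only [Int.card_Icc, Finset.prod_const, Finset.card_univ, Fintype.card_fin]
  congr 1
  omega

/-- For finitely supported `u` on ℤ² with |supp u| = N large enough,
V◇_{⌊(√N−5)/2⌋} ⊆ supp u* ⊆ V□_{⌈√(N/2)⌉+2}. -/
theorem stmt3 :
    ∃ N₀ : ℕ, ∀ u : ZLat 2 → NNReal, (Function.support u).Finite →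
      ∀ N : ℕ, (Function.support u).ncard = N → N₀ ≤ N →
        VdiaI 2 ⌊(Real.sqrt N - 5) / 2⌋ ⊆ Function.support (RZd 2 u) ∧
        Function.support (RZd 2 u) ⊆ VboxI 2 (⌈Real.sqrt ((N : ℝ) / 2)⌉ + 2) := by
  refine ⟨0, fun u hu N hN _ => ?_⟩
  obtain ⟨K, hK, hsupp⟩ := support_RZd u hu
  obtain ⟨h0, h1, -, hm⟩ := closed_all hu.toFinset K hK
  have hcard := card_iterT hu.toFinset K
  rw [← Set.ncard_eq_toFinset_card _ hu, hN] at hcard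
  rw [hsupp]
  generalize iterT hu.toFinset K = S at h0 h1 hm hcard
  constructor
  · intro p hp
    by_contra hpS
    rw [Finset.mem_coe] at hpS
    obtain ⟨l, hl⟩ : ∃ l : ℕ, (l : ℤ) = |p 0| + |p 1| :=
      ⟨(|p 0| + |p 1|).toNat, Int.toNat_of_nonneg (by positivity)⟩
    have hbox : S.card ≤ (2 * (l + 1) + 1) ^ 2 := by
      apply box_card
      intro y hy i
      by_contra hcon
      push Not at hcon
      push_cast at hcon
      exact hpS (diamond S h0 h1 hm y hy i p (by omega))
    have hp' : (l : ℤ) ≤ ⌊(Real.sqrt N - 5) / 2⌋ := by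
      have := hp
      simp only [VdiaI, Set.mem_ofPred_eq, Fin.sum_univ_two] at this
      rw [hl]
      simpa using this
    rw [Int.le_floor] at hp'
    push_cast at hp'
    have h5 : 2 * (l : ℝ) + 5 ≤ Real.sqrt N := by linarith
    have h6 : (2 * (l : ℝ) + 5) ^ 2 ≤ N := by
      rw [← Real.le_sqrt (by positivity) (by positivity)]
      exact h5
    rw [hcard] at hbox
    have h7 : (N : ℝ) ≤ (2 * (l + 1) + 1) ^ 2 := by exact_mod_cast hbox
    have : (0 : ℝ) ≤ l := by positivity
    nlinarith
  · intro x hx i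
    rw [Finset.mem_coe] at hx
    by_contra hcon
    push Not at hcon
    obtain ⟨r, hr⟩ : ∃ r : ℕ, (r : ℤ) = ⌈Real.sqrt ((N : ℝ) / 2)⌉ :=
      ⟨⌈Real.sqrt ((N : ℝ) / 2)⌉.toNat, Int.toNat_of_nonneg (Int.ceil_nonneg (Real.sqrt_nonneg _))⟩
    rw [← hr] at hcon
    have hc := diamond_card S (r + 1) (fun y hy => diamond S h0 h1 hm x hx i y (by
      push_cast at hy; omega))
    have h2 : Real.sqrt ((N : ℝ) / 2) ≤ r := by
      have := Int.le_ceil (Real.sqrt ((N : ℝ) / 2))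
      rw [← hr] at this
      exact_mod_cast this
    have h3 : (N : ℝ) / 2 ≤ r ^ 2 := (Real.sqrt_le_left (by positivity)).1 h2
    rw [hcard] at hc
    have h4 : ((r : ℝ) + 1 + 1) ^ 2 + (r + 1) ^ 2 ≤ N := by exact_mod_cast hc
    have : (0 : ℝ) ≤ r := by positivity
    nlinarith

end
end
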